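/- Let n and N be integers with 2 ≤ n and n dividing N. Then there exists a subset S' of 𝒫(n,N) satisfying: (a) |S' ∩ 𝒫(n,N,H)| / |𝒫(n,N,H)| = 1 − O(log H / √H) as H → ∞; and (b) for every P ∈ S' there exists a constant α with 0 < α < 1 such that the number of n-free integers d with |d| ≤ x for which the twisted superelliptic curve y^n = d·P(t) has a non-trivial ℚ-rational point is O(x · (log x)^{−α}) as x → ∞. -/

import Mathlib

open Polynomial Filter Asymptotics

/-- `𝒫(n,N)`: integer polynomials of degree `N` all of whose roots (in `ℂ`) have
multiplicity at most `n - 1`. -/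
def PolySet (n N : ℕ) : Set (Polynomial ℤ) :=
  {P | P.natDegree = N ∧ P ≠ 0 ∧
    ∀ z : ℂ, (P.map (Int.castRingHom ℂ)).rootMultiplicity z ≤ n - 1}

/-- The height of `P` (max of the absolute values of the coefficients) is at most `H`. -/
def HeightLE (P : Polynomial ℤ) (H : ℕ) : Prop := ∀ i, |P.coeff i| ≤ (H : ℤ)

/-- `d` is an `n`-free integer: `d ∉ {0,1}` and no `p^n` divides `d`. -/
def NFree (n : ℕ) (d : ℤ) : Prop :=
  d ≠ 0 ∧ d ≠ 1 ∧ ∀ p : ℕ, p.Prime → ¬ ((p : ℤ) ^ n ∣ d)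

/-- The twisted superelliptic curve `y^n = d·P(t)` has a non-trivial `ℚ`-rational point:
either an affine point with `y ≠ 0`, or (when `n ∣ N`) a point at infinity, i.e.
`d · leadingCoeff P` is a nonzero `n`-th power in `ℚ`. -/
def HasNontrivialPoint (n N : ℕ) (P : Polynomial ℤ) (d : ℤ) : Prop :=
  (∃ t y : ℚ, y ≠ 0 ∧ y ^ n = (d : ℚ) * Polynomial.aeval t P) ∨
  (n ∣ N ∧ ∃ y : ℚ, y ≠ 0 ∧ y ^ n = (d : ℚ) * (P.leadingCoeff : ℚ))

/-!
The set consists of the polynomials of `𝒫(n,N)` irreducible over `ℚ` (all of `𝒫(n,0)` when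
`N = 0`).

*Density.* By Gauss's lemma a reducible `P` factors over `ℤ` as `Q R` with both degrees positive,
and the Mahler measure is multiplicative, at least `1` on nonzero integer polynomials, and at most
`(N + 1) H` on those of degree `N` and height `H`. Counting pairs `(Q, R)` dyadically in the
Mahler measure of `Q` yields `O(H ^ N log H)` reducible polynomials of degree `N` and height at
most `H`, against at least `H ^ (N + 1)` polynomials in all.

*Local obstruction.* Let `p` be a prime modulo which `P` has no root on the projective line. As
`n ∣ N`, clearing denominators turns a rational point on `y ^ n = d P(t)` into `z ^ n = d F(a, b)`
with `F` the binary form of `P` and `a`, `b` coprime. Then `p` does not divide `F(a, b)`, so the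
exponent of `p` in `d` is a multiple of `n`, and `p ∤ d` because `d` is `n`-free.

*Many obstructing primes.* Instead of Chebotarev's theorem, only the simple pole at `1` of
Dedekind zeta functions is used. Let `P` be irreducible of degree at least `2`, with root `θ` and
splitting field `L`, and let `K = ℚ(θ)`. The number of prime ideals of `K` of norm `p` has mean at
most `1` over the primes `p`, so the densities of the primes with at least one and with at least
two such ideals add up to at most `1`. Up to finitely many exceptions, a prime that is the norm of
an ideal of `L` has two roots of `P` modulo `p`, hence two ideals of norm `p` in `K`; such primes
have lower density at least `1 / [L : ℚ]`. So a positive proportion of the primes has no ideal of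
norm `p` in `K`, and thus no root of `P`. Densities are expressed through `∑ p ^ (-s)` compared
with `log (1 / (s - 1))` as `s → 1⁺`.

*Sieve.* The weighting `log m = ∑_{k ∣ m} Λ(k)` and Chebyshev's bound reduce the number of
integers up to `x` free of obstructing primes to the sum of their reciprocals, which is estimated
by an Euler product at `s = 1 + 1 / log x`.
-/

section EulerProduct

variable {M : Type*} [CommMonoidWithZero M]

/-- The elements of `M` left over by a sieve with the elements of `S`: those divisible by none of
them. -/
def siftedSet (S : Set M) : Set M := {m | ∀ p ∈ S, ¬ p ∣ m}

variable [IsCancelMulZero M] [Subsingleton Mˣ] {f : M →* ℝ} {G : Finset M}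

lemma mul_mem_siftedSet_iff {p : M} (hp : Prime p) (hG : ∀ q ∈ G, Prime q) (hpG : p ∉ G) (m : M) :
    p * m ∈ siftedSet (G : Set M) ↔ m ∈ siftedSet (G : Set M) := by
  refine forall₂_congr fun q hq => not_congr ⟨fun h => ?_, fun h => h.mul_left p⟩
  refine ((hG q hq).dvd_or_dvd h).resolve_left fun hqp => hpG ?_
  rwa [← associated_iff_eq.mp ((hG q hq).associated_of_dvd hp hqp)]

theorem tsum_indicator_siftedSet (hf : Summable f) (hG : ∀ p ∈ G, Prime p) :
    ∑' m, (siftedSet (G : Set M)).indicator f m = (∏ p ∈ G, (1 - f p)) * ∑' m, f m := by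
  classical
  induction G using Finset.induction_on with
  | empty => simp [siftedSet]
  | insert p G hpG ih =>
    obtain ⟨hp, hG⟩ := Finset.forall_mem_insert _ _ _ |>.mp hG
    have split : siftedSet (G : Set M) =
        siftedSet (insert p G : Finset M) ∪ (siftedSet (G : Set M) ∩ {m | p ∣ m}) := by
      ext m
      simp only [siftedSet, Finset.coe_insert, Set.mem_insert_iff, Set.mem_union,
        Set.mem_inter_iff, Set.mem_ofPred_eq, forall_eq_or_imp]
      tauto
    have disjoint : Disjoint (siftedSet ((insert p G : Finset M) : Set M))
        (siftedSet (G : Set M) ∩ {m | p ∣ m}) :=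
      Set.disjoint_left.mpr fun m hm hm' => hm p (by simp) hm'.2
    have multiples : ∑' m, (siftedSet (G : Set M) ∩ {m | p ∣ m}).indicator f m =
        f p * ∑' m, (siftedSet (G : Set M)).indicator f m := by
      rw [← (mul_right_injective₀ hp.ne_zero).tsum_eq, ← tsum_mul_left]
      · refine tsum_congr fun m => ?_
        by_cases hm : m ∈ siftedSet (G : Set M) <;>
          simp [Set.indicator, mul_mem_siftedSet_iff hp hG hpG, hm]
      · refine Set.support_indicator_subset.trans ?_
        rintro m ⟨-, k, rfl⟩
        exact ⟨k, rfl⟩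
    have total : ∑' m, (siftedSet (G : Set M)).indicator f m =
        ∑' m, (siftedSet ((insert p G : Finset M) : Set M)).indicator f m +
          f p * ∑' m, (siftedSet (G : Set M)).indicator f m := by
      conv_lhs => rw [split, Set.indicator_union_of_disjoint disjoint]
      rw [(hf.indicator _).tsum_add (hf.indicator _), multiples]
    rw [ih hG] at total
    rw [Finset.prod_insert hpG]
    linear_combination -total

lemma sum_le_exp_neg_sum_mul_tsum (hf : Summable f) (hf0 : ∀ m, 0 ≤ f m)
    (hG : ∀ p ∈ G, Prime p) (hG1 : ∀ p ∈ G, f p ≤ 1) {T : Finset M}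
    (hT : (T : Set M) ⊆ siftedSet (G : Set M)) :
    ∑ m ∈ T, f m ≤ Real.exp (-∑ p ∈ G, f p) * ∑' m, f m := by
  calc ∑ m ∈ T, f m = ∑ m ∈ T, (siftedSet (G : Set M)).indicator f m :=
        Finset.sum_congr rfl fun m hm => (Set.indicator_of_mem (hT hm) f).symm
    _ ≤ ∑' m, (siftedSet (G : Set M)).indicator f m :=
        (hf.indicator _).sum_le_tsum T fun m _ => Set.indicator_nonneg (fun m _ => hf0 m) m
    _ = (∏ p ∈ G, (1 - f p)) * ∑' m, f m := tsum_indicator_siftedSet hf hG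
    _ ≤ Real.exp (-∑ p ∈ G, f p) * ∑' m, f m := by
        refine mul_le_mul_of_nonneg_right ?_ (tsum_nonneg hf0)
        rw [← Finset.sum_neg_distrib, Real.exp_sum]
        exact Finset.prod_le_prod (fun p hp => sub_nonneg.mpr (hG1 p hp))
          fun p _ => Real.one_sub_le_exp_neg (f p)

variable {S : Set M}

theorem sum_le_exp_neg_tsum_indicator_mul_tsum (hf : Summable f) (hf0 : ∀ m, 0 ≤ f m)
    (hS : ∀ p ∈ S, Prime p) (hS1 : ∀ p ∈ S, f p ≤ 1) {T : Finset M}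
    (hT : (T : Set M) ⊆ siftedSet S) :
    ∑ m ∈ T, f m ≤ Real.exp (-∑' p, S.indicator f p) * ∑' m, f m := by
  classical
  have tendsto := ((Real.continuous_exp.tendsto _).comp (hf.indicator S).hasSum.neg).mul_const
    (∑' m, f m)
  refine ge_of_tendsto' tendsto fun G => ?_
  have h := sum_le_exp_neg_sum_mul_tsum (G := {p ∈ G | p ∈ S}) hf hf0
    (fun p hp => hS p (Finset.mem_filter.mp hp).2) (fun p hp => hS1 p (Finset.mem_filter.mp hp).2)
    (hT.trans fun m hm p hp => hm p (Finset.mem_filter.mp hp).2)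
  rw [Finset.sum_filter] at h
  simpa only [Function.comp_apply, Finset.sum_neg_distrib, Set.indicator_apply] using h

theorem tsum_indicator_le_log_tsum (hf : Summable f) (hf0 : ∀ m, 0 ≤ f m)
    (hS : ∀ p ∈ S, Prime p) (hS1 : ∀ p ∈ S, f p ≤ 1) :
    ∑' p, S.indicator f p ≤ Real.log (∑' m, f m) := by
  have one_mem : (1 : M) ∈ siftedSet S := fun p hp h =>
    (hS p hp).not_isUnit (isUnit_of_dvd_one h)
  have h := sum_le_exp_neg_tsum_indicator_mul_tsum (T := {1}) hf hf0 hS hS1 (by simpa using one_mem)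
  rw [Finset.sum_singleton, map_one, Real.exp_neg, ← div_eq_inv_mul,
    one_le_div (Real.exp_pos _)] at h
  exact (Real.le_log_iff_exp_le ((Real.exp_pos _).trans_le h)).mpr h

lemma neg_log_one_sub_le {u : ℝ} (hu : u ≤ 1 / 2) : -Real.log (1 - u) ≤ u + 2 * u ^ 2 := by
  have inv_le : (1 - u)⁻¹ ≤ 1 + u + 2 * u ^ 2 := by
    rw [inv_le_iff_one_le_mul₀ (by linarith)]
    nlinarith [mul_nonneg (sq_nonneg u) (show 0 ≤ 1 - 2 * u by linarith)]
  linarith [Real.one_sub_inv_le_log_of_pos (show 0 < 1 - u by linarith)]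

end EulerProduct

section UFM

variable {M : Type*} [CommMonoidWithZero M] [UniqueFactorizationMonoid M] [Subsingleton Mˣ]
  {f : M →* ℝ}

lemma exists_tsum_indicator_siftedSet_le (hf : Summable f) (hf0 : ∀ m, 0 ≤ f m) (hzero : f 0 = 0) :
    ∃ G : Finset M, (∀ p ∈ G, Prime p) ∧ ∑' m, (siftedSet (G : Set M)).indicator f m ≤ 2 := by
  classical
  obtain ⟨T, hT⟩ := (hf.hasSum.eventually (lt_mem_nhds (sub_one_lt _))).exists
  let G := T.biUnion UniqueFactorizationMonoid.primeFactors
  have eq_one {m : M} (hmG : m ∈ siftedSet (G : Set M)) (hmT : m ∈ T) (hm0 : m ≠ 0) : m = 1 := by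
    by_contra hm1
    obtain ⟨p, hp⟩ := UniqueFactorizationMonoid.exists_mem_normalizedFactors hm0
      fun h => hm1 (isUnit_iff_eq_one.mp h)
    refine hmG p ?_ (UniqueFactorizationMonoid.dvd_of_mem_normalizedFactors hp)
    exact Finset.mem_biUnion.mpr ⟨m, hmT, UniqueFactorizationMonoid.mem_primeFactors.mpr hp⟩
  have sifted_le (m : M) : (siftedSet (G : Set M)).indicator f m + (T : Set M).indicator f m ≤
      f m + ({1} : Set M).indicator f m := by
    have indicator_le (S : Set M) : S.indicator f m ≤ f m :=
      Set.indicator_le_self' (fun m _ => hf0 m) m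
    have one_nonneg := Set.indicator_nonneg (s := {1}) (fun m _ => hf0 m) m
    by_cases hmG : m ∈ siftedSet (G : Set M)
    · by_cases hmT : m ∈ T
      · rcases eq_or_ne m 0 with rfl | hm0
        · simp [Set.indicator, hzero]
        · obtain rfl := eq_one hmG hmT hm0
          rw [Set.indicator_of_mem hmG, Set.indicator_of_mem (Finset.mem_coe.mpr hmT),
            Set.indicator_of_mem (Set.mem_singleton _)]
      · rw [Set.indicator_of_notMem (s := (T : Set M)) hmT]
        linarith [indicator_le (siftedSet G)]
    · rw [Set.indicator_of_notMem hmG]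
      linarith [indicator_le T]
  refine ⟨G, fun p hp => ?_, ?_⟩
  · obtain ⟨m, -, hp⟩ := Finset.mem_biUnion.mp hp
    exact UniqueFactorizationMonoid.prime_of_normalized_factor p
      (UniqueFactorizationMonoid.mem_primeFactors.mp hp)
  · have h := Summable.tsum_le_tsum sifted_le
      ((hf.indicator _).add (hf.indicator _)) (hf.add (hf.indicator _))
    rw [(hf.indicator _).tsum_add (hf.indicator _), hf.tsum_add (hf.indicator _),
      ← sum_eq_tsum_indicator, ← Finset.coe_singleton, ← sum_eq_tsum_indicator,
      Finset.sum_singleton, map_one] at h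
    linarith

theorem exists_log_tsum_le (hf : Summable f) (hf0 : ∀ m, 0 ≤ f m)
    (hzero : f 0 = 0) (hhalf : ∀ p, Prime p → f p ≤ 1 / 2) :
    ∃ G : Finset M, (∀ p ∈ G, Prime p) ∧
      Real.log (∑' m, f m) ≤ Real.log 2 + ∑ p ∈ G, (f p + 2 * f p ^ 2) := by
  obtain ⟨G, hG, h⟩ := exists_tsum_indicator_siftedSet_le hf hf0 hzero
  refine ⟨G, hG, ?_⟩
  have factor_pos : ∀ p ∈ G, 0 < 1 - f p := fun p hp => by linarith [hhalf p (hG p hp)]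
  have prod_pos := Finset.prod_pos factor_pos
  have tsum_pos : 0 < ∑' m, f m :=
    hf.tsum_pos hf0 1 (by simp)
  rw [tsum_indicator_siftedSet hf hG] at h
  have hlog := Real.log_le_log (mul_pos prod_pos tsum_pos) h
  rw [Real.log_mul prod_pos.ne' tsum_pos.ne',
    Real.log_prod fun p hp => (factor_pos p hp).ne'] at hlog
  have := Finset.sum_le_sum fun p hp => neg_log_one_sub_le (hhalf p (hG p hp))
  rw [Finset.sum_neg_distrib] at this
  linarith

end UFM

section Sieve

/-- The completely multiplicative function `m ↦ m ^ (-s)`. -/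
noncomputable def rpowNegHom (s : ℝ) : ℕ →* ℝ where
  toFun m := (m : ℝ) ^ (-s)
  map_one' := by simp
  map_mul' a b := by rw [Nat.cast_mul, Real.mul_rpow a.cast_nonneg b.cast_nonneg]

lemma rpowNegHom_apply (s : ℝ) (m : ℕ) : rpowNegHom s m = (m : ℝ) ^ (-s) := rfl

lemma rpowNegHom_nonneg (s : ℝ) (m : ℕ) : 0 ≤ rpowNegHom s m := Real.rpow_nonneg m.cast_nonneg _

lemma rpowNegHom_prime_le_half {s : ℝ} (hs : 1 < s) {p : ℕ} (hp : p.Prime) :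
    rpowNegHom s p ≤ 1 / 2 := by
  have two_le : (2 : ℝ) ≤ p := mod_cast hp.two_le
  calc rpowNegHom s p ≤ (p : ℝ) ^ (-1 : ℝ) :=
        Real.rpow_le_rpow_of_exponent_le (by linarith) (by linarith)
    _ ≤ 1 / 2 := by rw [Real.rpow_neg_one, one_div]; gcongr

lemma summable_rpowNegHom {s : ℝ} (hs : 1 < s) : Summable (rpowNegHom s) :=
  Real.summable_nat_rpow.mpr (by linarith)

/-- The Dirichlet series `∑_{m ∈ S} m ^ (-s)`. -/
noncomputable def dirichletSum (S : Set ℕ) (s : ℝ) : ℝ := ∑' m, S.indicator (rpowNegHom s) m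

open Topology in
/-- `S` has lower Dirichlet density at least `δ`, in the strong form with a bounded error:
`∑_{m ∈ S} m ^ (-s) ≥ δ log (1 / (s - 1)) - O(1)` as `s → 1⁺`. -/
def HasLowerDensity (S : Set ℕ) (δ : ℝ) : Prop :=
  ∃ C : ℝ, ∀ᶠ s : ℝ in 𝓝[>] 1, δ * -Real.log (s - 1) - C ≤ dirichletSum S s

open scoped Classical in
/-- The integers of `[1, x]` left over by a sieve with the elements of `S`. -/
noncomputable def sifted (S : Set ℕ) (x : ℕ) : Finset ℕ :=
  {m ∈ Finset.Icc 1 x | m ∈ siftedSet S}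

lemma mem_sifted {S : Set ℕ} {x m : ℕ} : m ∈ sifted S x ↔ (1 ≤ m ∧ m ≤ x) ∧ m ∈ siftedSet S := by
  simp [sifted]

lemma coe_sifted_subset (S : Set ℕ) (x : ℕ) : (sifted S x : Set ℕ) ⊆ siftedSet S :=
  fun _ hm => (mem_sifted.mp hm).2

open ArithmeticFunction

lemma mem_sifted_of_dvd {S : Set ℕ} {x j m : ℕ} (hm : m ∈ sifted S x) (hjm : j ∣ m) :
    j ∈ sifted S x := by
  obtain ⟨⟨hm1, hmx⟩, hmS⟩ := mem_sifted.mp hm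
  exact mem_sifted.mpr ⟨⟨Nat.pos_of_dvd_of_pos hjm hm1, (Nat.le_of_dvd hm1 hjm).trans hmx⟩,
    fun p hp hpj => hmS p hp (hpj.trans hjm)⟩

lemma log_eq_sum_sifted_vonMangoldt {S : Set ℕ} {x m : ℕ} (hm : m ∈ sifted S x) :
    Real.log m = ∑ j ∈ sifted S x with j ∣ m, Λ (m / j) := by
  have hm0 : m ≠ 0 := Nat.one_le_iff_ne_zero.mp (mem_sifted.mp hm).1.1
  rw [← vonMangoldt_sum, ← Nat.sum_div_divisors]
  refine Finset.sum_congr (Finset.ext fun j => ?_) fun _ _ => rfl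
  rw [Nat.mem_divisors, Finset.mem_filter]
  exact ⟨fun h => ⟨mem_sifted_of_dvd hm h.1, h.1⟩, fun h => ⟨h.2, hm0⟩⟩

lemma sum_vonMangoldt_div_le_psi {T : Finset ℕ} {x : ℕ} (hT : T ⊆ Finset.Icc 1 x) (j : ℕ) :
    ∑ m ∈ T with j ∣ m, Λ (m / j) ≤ Chebyshev.psi ((x : ℝ) / j) := by
  classical
  have injOn : Set.InjOn (· / j) ({m ∈ T | j ∣ m} : Finset ℕ) := fun a ha b hb hab => by
    have ha := (Finset.mem_filter.mp (Finset.mem_coe.mp ha)).2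
    have hb := (Finset.mem_filter.mp (Finset.mem_coe.mp hb)).2
    rw [← Nat.div_mul_cancel ha, ← Nat.div_mul_cancel hb]
    exact congrArg (· * j) hab
  rw [← Finset.sum_image (f := fun k => Λ k) injOn, Chebyshev.psi, Nat.floor_div_eq_div]
  refine Finset.sum_le_sum_of_subset_of_nonneg (fun k hk => ?_) fun _ _ _ => vonMangoldt_nonneg
  obtain ⟨m, hm, rfl⟩ := Finset.mem_image.mp hk
  obtain ⟨hmT, hjm⟩ := Finset.mem_filter.mp hm
  obtain ⟨hm1, hmx⟩ := Finset.mem_Icc.mp (hT hmT)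
  exact Finset.mem_Ioc.mpr ⟨Nat.div_pos (Nat.le_of_dvd hm1 hjm) (Nat.pos_of_dvd_of_pos hjm hm1),
    Nat.div_le_div_right hmx⟩

lemma sum_log_sifted_le (S : Set ℕ) (x : ℕ) :
    ∑ m ∈ sifted S x, Real.log m ≤ (Real.log 4 + 4) * x * ∑ m ∈ sifted S x, (m : ℝ)⁻¹ :=
  calc ∑ m ∈ sifted S x, Real.log m
      = ∑ m ∈ sifted S x, ∑ j ∈ sifted S x with j ∣ m, Λ (m / j) :=
        Finset.sum_congr rfl fun _ => log_eq_sum_sifted_vonMangoldt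
    _ = ∑ j ∈ sifted S x, ∑ m ∈ sifted S x with j ∣ m, Λ (m / j) := by
        simp only [Finset.sum_filter]
        exact Finset.sum_comm
    _ ≤ ∑ j ∈ sifted S x, Chebyshev.psi ((x : ℝ) / j) :=
        Finset.sum_le_sum fun j _ => sum_vonMangoldt_div_le_psi
          (fun m hm => Finset.mem_Icc.mpr (mem_sifted.mp hm).1) j
    _ ≤ (Real.log 4 + 4) * x * ∑ m ∈ sifted S x, (m : ℝ)⁻¹ := by
        rw [Finset.mul_sum]
        refine Finset.sum_le_sum fun m _ => ?_
        rw [mul_assoc, ← div_eq_mul_inv]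
        exact Chebyshev.psi_le_const_mul_self (by positivity)

lemma card_sifted_mul_log_le (S : Set ℕ) {x : ℕ} (hx : 1 ≤ x) :
    ((sifted S x).card : ℝ) * Real.log x ≤
      (Real.log 4 + 5) * x * ∑ m ∈ sifted S x, (m : ℝ)⁻¹ := by
  have sum_log_div_le : ∑ m ∈ sifted S x, Real.log (x / m) ≤
      x * ∑ m ∈ sifted S x, (m : ℝ)⁻¹ := by
    rw [Finset.mul_sum]
    refine Finset.sum_le_sum fun m _ => ?_
    rw [← div_eq_mul_inv]
    exact Real.log_le_self (by positivity)
  have card_mul_log : ((sifted S x).card : ℝ) * Real.log x =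
      ∑ m ∈ sifted S x, Real.log (x / m) + ∑ m ∈ sifted S x, Real.log m := by
    rw [← Finset.sum_add_distrib, ← nsmul_eq_mul, ← Finset.sum_const]
    refine Finset.sum_congr rfl fun m hm => ?_
    have hm0 : (m : ℝ) ≠ 0 := mod_cast Nat.one_le_iff_ne_zero.mp (mem_sifted.mp hm).1.1
    rw [Real.log_div (by positivity) hm0, sub_add_cancel]
  linarith [sum_log_sifted_le S x]

lemma inv_le_exp_one_mul_rpowNegHom {m x : ℕ} (hm : 1 ≤ m) (hmx : m ≤ x) :
    (m : ℝ)⁻¹ ≤ Real.exp 1 * rpowNegHom (1 + (Real.log x)⁻¹) m := by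
  have hm0 : (0 : ℝ) < m := mod_cast hm
  have log_le : Real.log m * (Real.log x)⁻¹ ≤ 1 := by
    rw [← div_eq_mul_inv]
    exact div_le_one_of_le₀ (by gcongr) (Real.log_natCast_nonneg x)
  rw [rpowNegHom_apply, neg_add, Real.rpow_add hm0, Real.rpow_neg_one, Real.rpow_def_of_pos hm0,
    mul_left_comm, ← Real.exp_add]
  exact le_mul_of_one_le_right (by positivity) (Real.one_le_exp (by linarith))

open Topology

lemma eventually_tsum_rpowNegHom_le :
    ∀ᶠ s : ℝ in 𝓝[>] 1, ∑' m, rpowNegHom s m ≤ 2 / (s - 1) := by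
  filter_upwards [tendsto_sub_mul_tsum_nat_rpow.eventually (ge_mem_nhds one_lt_two),
    self_mem_nhdsWithin] with s hs (hs1 : 1 < s)
  rw [le_div_iff₀' (by linarith)]
  simpa only [rpowNegHom_apply, Real.rpow_neg (Nat.cast_nonneg _), one_div] using hs

lemma tendsto_one_add_inv_log :
    Tendsto (fun x : ℕ => 1 + (Real.log x)⁻¹) atTop (𝓝[>] 1) := by
  have hlog : Tendsto (fun x : ℕ => Real.log x) atTop atTop :=
    Real.tendsto_log_atTop.comp tendsto_natCast_atTop_atTop
  refine tendsto_nhdsWithin_iff.mpr ⟨?_, ?_⟩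
  · simpa using (tendsto_inv_atTop_zero.comp hlog).const_add 1
  · filter_upwards [hlog.eventually_gt_atTop 0] with x hx
    simpa using hx

theorem card_sifted_isBigO {S : Set ℕ} (hS : ∀ p ∈ S, p.Prime) {δ : ℝ}
    (hδ : HasLowerDensity S δ) :
    (fun x : ℕ => ((sifted S x).card : ℝ)) =O[atTop]
      fun x : ℕ => (x : ℝ) * Real.log x ^ (-δ) := by
  obtain ⟨C, hC⟩ := hδ
  refine .of_bound ((Real.log 4 + 5) * (Real.exp 1 * (Real.exp C * 2))) ?_
  filter_upwards [tendsto_one_add_inv_log.eventually (hC.and eventually_tsum_rpowNegHom_le),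
    eventually_ge_atTop 2] with x ⟨hdens, hzeta⟩ hx
  have log_pos : 0 < Real.log x := Real.log_pos (mod_cast hx)
  have hs : 1 < 1 + (Real.log x)⁻¹ := by simpa using log_pos
  rw [add_sub_cancel_left] at hdens hzeta
  rw [Real.log_inv, neg_neg] at hdens
  have exp_le : Real.exp (-dirichletSum S (1 + (Real.log x)⁻¹)) ≤
      Real.exp C * Real.log x ^ (-δ) := by
    rw [Real.rpow_def_of_pos log_pos, ← Real.exp_add]
    exact Real.exp_le_exp.mpr (by linarith)
  have sum_inv_le : ∑ m ∈ sifted S x, (m : ℝ)⁻¹ ≤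
      Real.exp 1 * (Real.exp C * Real.log x ^ (-δ) * (2 / (Real.log x)⁻¹)) :=
    calc ∑ m ∈ sifted S x, (m : ℝ)⁻¹
        ≤ ∑ m ∈ sifted S x, Real.exp 1 * rpowNegHom (1 + (Real.log x)⁻¹) m :=
          Finset.sum_le_sum fun m hm => inv_le_exp_one_mul_rpowNegHom
            (mem_sifted.mp hm).1.1 (mem_sifted.mp hm).1.2
      _ ≤ Real.exp 1 * (Real.exp (-dirichletSum S (1 + (Real.log x)⁻¹)) *
            ∑' m, rpowNegHom (1 + (Real.log x)⁻¹) m) := by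
          rw [← Finset.mul_sum]
          gcongr
          exact sum_le_exp_neg_tsum_indicator_mul_tsum (summable_rpowNegHom hs)
            (rpowNegHom_nonneg _) (fun p hp => (hS p hp).prime)
            (fun p hp => (rpowNegHom_prime_le_half hs (hS p hp)).trans (by norm_num))
            (coe_sifted_subset S x)
      _ ≤ _ := by
          have : 0 ≤ ∑' m, rpowNegHom (1 + (Real.log x)⁻¹) m := tsum_nonneg (rpowNegHom_nonneg _)
          gcongr
  have card_le := (card_sifted_mul_log_le S (by lia)).trans
    (mul_le_mul_of_nonneg_left sum_inv_le (by positivity))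
  rw [Real.norm_of_nonneg (by positivity), Real.norm_of_nonneg (by positivity)]
  refine le_of_mul_le_mul_right (card_le.trans_eq ?_) log_pos
  rw [div_inv_eq_mul]
  ring

end Sieve

section DedekindZeta

open NumberField Topology

lemma rpowNegHom_le_inv {s : ℝ} (hs : 1 < s) (m : ℕ) : rpowNegHom s m ≤ (m : ℝ)⁻¹ := by
  rcases Nat.eq_zero_or_pos m with rfl | hm
  · simp [rpowNegHom_apply, Real.zero_rpow (show -s ≠ 0 by linarith)]
  · rw [← Real.rpow_neg_one]
    exact Real.rpow_le_rpow_of_exponent_le (mod_cast hm) (by linarith)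

variable (K : Type*) [Field K] [NumberField K]

/-- The number of ideals of norm `n` in the ring of integers of `K`. -/
noncomputable def idealCount (n : ℕ) : ℕ := Nat.card {I : Ideal (𝓞 K) // Ideal.absNorm I = n}

/-- The completely multiplicative function `I ↦ (N I) ^ (-s)` on the ideals of the ring of integers
of `K`; its sum is the Dedekind zeta function, since the zero ideal contributes `0 ^ (-s) = 0`. -/
noncomputable def absNormRpow (s : ℝ) : Ideal (𝓞 K) →* ℝ :=
  (rpowNegHom s).comp (Ideal.absNorm (S := 𝓞 K) : Ideal (𝓞 K) →* ℕ)

variable {K}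

lemma absNormRpow_apply (s : ℝ) (I : Ideal (𝓞 K)) :
    absNormRpow K s I = rpowNegHom s (Ideal.absNorm I) := rfl

lemma absNormRpow_nonneg (s : ℝ) (I : Ideal (𝓞 K)) : 0 ≤ absNormRpow K s I :=
  rpowNegHom_nonneg s _

instance (n : ℕ) : Finite {I : Ideal (𝓞 K) // Ideal.absNorm I = n} :=
  Ideal.finite_setOfPred_absNorm_eq n

lemma tsum_absNorm_fiber (g : ℕ → ℝ) (n : ℕ) :
    ∑' I : {I : Ideal (𝓞 K) // Ideal.absNorm I = n}, g (Ideal.absNorm I.1) =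
      idealCount K n * g n := by
  rw [tsum_congr fun I : {I : Ideal (𝓞 K) // Ideal.absNorm I = n} => congrArg g I.2, tsum_const,
    nsmul_eq_mul, idealCount]

lemma summable_comp_absNorm_iff {g : ℕ → ℝ} (hg : ∀ n, 0 ≤ g n) :
    Summable (fun I : Ideal (𝓞 K) => g (Ideal.absNorm I)) ↔
      Summable fun n => idealCount K n * g n := by
  rw [← (Equiv.sigmaFiberEquiv (Ideal.absNorm (S := 𝓞 K))).summable_iff]
  refine (summable_sigma_of_nonneg fun _ => hg _).trans ?_
  exact (and_iff_right fun _ => Summable.of_finite).trans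
    (summable_congr fun n => tsum_absNorm_fiber g n)

lemma tsum_comp_absNorm {g : ℕ → ℝ} (hg : ∀ n, 0 ≤ g n) :
    ∑' I : Ideal (𝓞 K), g (Ideal.absNorm I) = ∑' n, idealCount K n * g n := by
  by_cases h : Summable fun I : Ideal (𝓞 K) => g (Ideal.absNorm I)
  · have summable := (Equiv.sigmaFiberEquiv (Ideal.absNorm (S := 𝓞 K))).summable_iff.mpr h
    rw [← (Equiv.sigmaFiberEquiv (Ideal.absNorm (S := 𝓞 K))).tsum_eq]
    refine summable.tsum_sigma.trans ?_
    exact tsum_congr fun n => tsum_absNorm_fiber g n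
  · rw [tsum_eq_zero_of_not_summable h,
      tsum_eq_zero_of_not_summable (mt (summable_comp_absNorm_iff hg).mpr h)]

lemma dedekindZeta_eq_tsum_absNormRpow {s : ℝ} (hs : 1 < s) :
    dedekindZeta K s = (∑' I, absNormRpow K s I : ℝ) := by
  simp only [absNormRpow_apply]
  rw [dedekindZeta, LSeries, tsum_comp_absNorm (rpowNegHom_nonneg s), Complex.ofReal_tsum]
  refine tsum_congr fun n => ?_
  rcases Nat.eq_zero_or_pos n with rfl | hn
  · simp [rpowNegHom_apply, Real.zero_rpow (show -s ≠ 0 by linarith)]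
  · rw [LSeries.term_of_ne_zero hn.ne', rpowNegHom_apply, Complex.ofReal_mul,
      Complex.ofReal_natCast, Complex.ofReal_cpow n.cast_nonneg, Complex.ofReal_natCast,
      Complex.ofReal_neg, Complex.cpow_neg, div_eq_mul_inv]
    rfl

variable (K)

lemma tendsto_sub_one_mul_tsum_absNormRpow :
    Tendsto (fun s : ℝ => (s - 1) * ∑' I, absNormRpow K s I) (𝓝[>] 1)
      (𝓝 (dedekindZeta_residue K)) := by
  have h := (Complex.continuous_re.tendsto _).comp (tendsto_sub_one_mul_dedekindZeta_nhdsGT K)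
  refine h.congr' ?_
  filter_upwards [self_mem_nhdsWithin] with s (hs : 1 < s)
  rw [Function.comp_apply, dedekindZeta_eq_tsum_absNormRpow hs, ← Complex.ofReal_one,
    ← Complex.ofReal_sub, ← Complex.ofReal_mul, Complex.ofReal_re]

lemma eventually_tsum_absNormRpow_pos :
    ∀ᶠ s : ℝ in 𝓝[>] 1, 0 < ∑' I, absNormRpow K s I := by
  filter_upwards [self_mem_nhdsWithin, (tendsto_sub_one_mul_tsum_absNormRpow K).eventually
    (lt_mem_nhds (dedekindZeta_residue_pos K))] with s (hs : 1 < s) h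
  exact pos_of_mul_pos_right h (sub_pos.mpr hs).le

lemma eventually_summable_absNormRpow : ∀ᶠ s : ℝ in 𝓝[>] 1, Summable (absNormRpow K s) := by
  filter_upwards [eventually_tsum_absNormRpow_pos K] with s h
  by_contra hs
  exact h.ne' (tsum_eq_zero_of_not_summable hs)

lemma exists_abs_log_tsum_absNormRpow_le :
    ∃ C : ℝ, ∀ᶠ s : ℝ in 𝓝[>] 1, |Real.log (∑' I, absNormRpow K s I) + Real.log (s - 1)| ≤ C := by
  have h := ((tendsto_sub_one_mul_tsum_absNormRpow K).log (dedekindZeta_residue_pos K).ne').abs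
  refine ⟨|Real.log (dedekindZeta_residue K)| + 1, ?_⟩
  filter_upwards [self_mem_nhdsWithin, eventually_tsum_absNormRpow_pos K,
    h.eventually (ge_mem_nhds (lt_add_one _))] with s (hs : 1 < s) hpos hle
  rwa [add_comm, ← Real.log_mul (sub_pos.mpr hs).ne' hpos.ne']

/-- The rational primes with at least `k` prime ideals of degree one of `K` above them. -/
def degreeOnePrimes (k : ℕ) : Set ℕ := {p | p.Prime ∧ k ≤ idealCount K p}

variable {K}

lemma prime_of_absNorm_prime {I : Ideal (𝓞 K)} (h : (Ideal.absNorm I).Prime) : Prime I := by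
  refine Ideal.prime_of_isPrime ?_ (Ideal.isPrime_of_irreducible_absNorm h)
  rintro rfl
  rw [Ideal.absNorm_bot] at h
  exact Nat.not_prime_zero h

lemma absNorm_under_prime {I : Ideal (𝓞 K)} (hI : Prime I) :
    (Ideal.absNorm (I.under ℤ)).Prime := by
  have := Ideal.isPrime_of_prime hI
  have : NeZero I := ⟨hI.ne_zero⟩
  exact Nat.absNorm_under_prime I

lemma absNorm_dvd_absNorm_under_pow (I : Ideal (𝓞 K)) :
    Ideal.absNorm I ∣ Ideal.absNorm (I.under ℤ) ^ Module.finrank ℚ K := by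
  rw [← RingOfIntegers.rank, ← Ideal.absNorm_span_natCast]
  exact Ideal.absNorm_dvd_absNorm_of_le
    ((Ideal.span_singleton_le_iff_mem I).mpr (Int.absNorm_under_mem I))

lemma absNorm_eq_or_sq_le {I : Ideal (𝓞 K)} (hI : Prime I) :
    Ideal.absNorm I = Ideal.absNorm (I.under ℤ) ∨
      Ideal.absNorm (I.under ℤ) ^ 2 ≤ Ideal.absNorm I := by
  have hp := absNorm_under_prime hI
  obtain ⟨k, -, hk⟩ := (Nat.dvd_prime_pow hp).mp (absNorm_dvd_absNorm_under_pow I)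
  rw [hk]
  match k with
  | 0 =>
    rw [pow_zero, Ideal.absNorm_eq_one_iff] at hk
    exact absurd hk (Ideal.isPrime_of_prime hI).ne_top
  | 1 => exact .inl (pow_one _)
  | k + 2 => exact .inr (Nat.pow_le_pow_right hp.pos (by lia))

lemma absNormRpow_prime_le_half {s : ℝ} (hs : 1 < s) {I : Ideal (𝓞 K)} (hI : Prime I) :
    absNormRpow K s I ≤ 1 / 2 := by
  have two_le := (absNorm_under_prime hI).two_le
  have : (2 : ℝ) ≤ Ideal.absNorm I := by
    rcases absNorm_eq_or_sq_le hI with h | h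
    · exact mod_cast h ▸ two_le
    · exact mod_cast two_le.trans ((Nat.le_self_pow two_ne_zero _).trans h)
  refine (rpowNegHom_le_inv hs _).trans ?_
  rw [one_div]
  exact inv_anti₀ two_pos this

lemma card_le_finrank_of_absNorm_under_eq {p : ℕ} {G : Finset (Ideal (𝓞 K))}
    (hG : ∀ I ∈ G, Prime I ∧ Ideal.absNorm (I.under ℤ) = p) : G.card ≤ Module.finrank ℚ K := by
  rcases G.eq_empty_or_nonempty with rfl | ⟨J, hJ⟩
  · simp
  have hp : p.Prime := (hG J hJ).2 ▸ absNorm_under_prime (hG J hJ).1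
  have prod_dvd : ∏ I ∈ G, I ∣ Ideal.span {(p : 𝓞 K)} := by
    refine Finset.prod_primes_dvd _ (fun I hI => (hG I hI).1) fun I hI => ?_
    rw [Ideal.dvd_span_singleton, ← (hG I hI).2]
    exact Int.absNorm_under_mem I
  have prod_le : ∏ I ∈ G, Ideal.absNorm I ≤ p ^ Module.finrank ℚ K := by
    have h := Ideal.absNorm_dvd_absNorm_of_le (Ideal.le_of_dvd prod_dvd)
    rw [Ideal.absNorm_span_natCast, map_prod, RingOfIntegers.rank] at h
    exact Nat.le_of_dvd (pow_pos hp.pos _) h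
  have le_prod : p ^ G.card ≤ ∏ I ∈ G, Ideal.absNorm I := by
    rw [← Finset.prod_const]
    refine Finset.prod_le_prod' fun I hI => Nat.le_of_dvd ?_ ?_
    · exact Nat.pos_of_ne_zero (Ideal.absNorm_eq_zero_iff.not.mpr (hG I hI).1.ne_zero)
    · exact (hG I hI).2 ▸ Int.absNorm_under_dvd_absNorm I
  exact (Nat.pow_le_pow_iff_right hp.one_lt).mp (le_prod.trans prod_le)

variable (K)

lemma indicator_degreeOnePrimes_add_le (s : ℝ) (p : ℕ) :
    (degreeOnePrimes K 1).indicator (rpowNegHom s) p +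
        (degreeOnePrimes K 2).indicator (rpowNegHom s) p ≤
      idealCount K p * {p | p.Prime}.indicator (rpowNegHom s) p := by
  have := rpowNegHom_nonneg s p
  simp only [degreeOnePrimes, Set.indicator_apply, Set.mem_ofPred_eq]
  by_cases hp : p.Prime
  · rcases Nat.lt_trichotomy (idealCount K p) 1 with h | h | h
    · simp [hp, Nat.lt_one_iff.mp h]
    · simp [hp, h]
    · have : (2 : ℝ) ≤ idealCount K p := mod_cast h
      simp only [hp, h.le, Nat.succ_le_of_lt h, and_self, if_true]
      nlinarith
  · simp [hp]

theorem exists_dirichletSum_degreeOnePrimes_add_le : ∃ C : ℝ, ∀ᶠ s : ℝ in 𝓝[>] 1,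
    dirichletSum (degreeOnePrimes K 1) s + dirichletSum (degreeOnePrimes K 2) s ≤
      -Real.log (s - 1) + C := by
  obtain ⟨C, hC⟩ := exists_abs_log_tsum_absNormRpow_le K
  refine ⟨C, ?_⟩
  filter_upwards [self_mem_nhdsWithin, hC, eventually_summable_absNormRpow K] with s (hs : 1 < s)
    log_le summable
  let g : ℕ → ℝ := {p | p.Prime}.indicator (rpowNegHom s)
  have g_nonneg (n : ℕ) : 0 ≤ g n := Set.indicator_nonneg (fun _ _ => rpowNegHom_nonneg s _) n
  have g_absNorm (I : Ideal (𝓞 K)) :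
      g (Ideal.absNorm I) = {I | (Ideal.absNorm I).Prime}.indicator (absNormRpow K s) I := rfl
  have summable_g : Summable fun I : Ideal (𝓞 K) => g (Ideal.absNorm I) := by
    simp only [g_absNorm]
    exact summable.indicator _
  calc dirichletSum (degreeOnePrimes K 1) s + dirichletSum (degreeOnePrimes K 2) s
      ≤ ∑' p, idealCount K p * g p := by
        have summable_rpow := summable_rpowNegHom hs
        rw [dirichletSum, dirichletSum,
          ← (summable_rpow.indicator _).tsum_add (summable_rpow.indicator _)]
        exact Summable.tsum_le_tsum (indicator_degreeOnePrimes_add_le K s)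
          ((summable_rpow.indicator _).add (summable_rpow.indicator _))
          ((summable_comp_absNorm_iff g_nonneg).mp summable_g)
    _ = ∑' I : Ideal (𝓞 K), {I | (Ideal.absNorm I).Prime}.indicator (absNormRpow K s) I :=
        (tsum_comp_absNorm g_nonneg).symm
    _ ≤ Real.log (∑' I, absNormRpow K s I) :=
        tsum_indicator_le_log_tsum summable (absNormRpow_nonneg s)
          (fun _ => prime_of_absNorm_prime)
          fun _ hI => (absNormRpow_prime_le_half hs (prime_of_absNorm_prime hI)).trans (by norm_num)
    _ ≤ -Real.log (s - 1) + C := by linarith [(abs_le.mp log_le).2]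

variable {K}

lemma absNormRpow_add_sq_le {s : ℝ} (hs : 1 < s) {I : Ideal (𝓞 K)} (hI : Prime I) :
    absNormRpow K s I + 2 * absNormRpow K s I ^ 2 ≤
      (degreeOnePrimes K 1).indicator (rpowNegHom s) (Ideal.absNorm (I.under ℤ)) +
        2 * ((Ideal.absNorm (I.under ℤ) : ℝ) ^ 2)⁻¹ := by
  have hp := absNorm_under_prime hI
  have nonneg := absNormRpow_nonneg s I
  have le_half := absNormRpow_prime_le_half hs hI
  rcases absNorm_eq_or_sq_le hI with h | h
  · have mem : Ideal.absNorm (I.under ℤ) ∈ degreeOnePrimes K 1 :=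
      ⟨hp, have : Nonempty {J : Ideal (𝓞 K) // Ideal.absNorm J = _} := ⟨⟨I, h⟩⟩; Nat.card_pos⟩
    rw [Set.indicator_of_mem mem, absNormRpow_apply, h, ← inv_pow]
    gcongr
    · exact rpowNegHom_nonneg s _
    · exact rpowNegHom_le_inv hs _
  · have le_inv_sq : absNormRpow K s I ≤ ((Ideal.absNorm (I.under ℤ) : ℝ) ^ 2)⁻¹ := by
      refine (rpowNegHom_le_inv hs _).trans (inv_anti₀ ?_ (mod_cast h))
      exact pow_pos (mod_cast hp.pos) 2
    have := Set.indicator_nonneg (s := degreeOnePrimes K 1) (fun n _ => rpowNegHom_nonneg s n)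
      (Ideal.absNorm (I.under ℤ))
    nlinarith

lemma sum_primes_absNormRpow_le {s : ℝ} (hs : 1 < s) {G : Finset (Ideal (𝓞 K))}
    (hG : ∀ I ∈ G, Prime I) :
    ∑ I ∈ G, (absNormRpow K s I + 2 * absNormRpow K s I ^ 2) ≤
      Module.finrank ℚ K *
        (dirichletSum (degreeOnePrimes K 1) s + 2 * ∑' n : ℕ, ((n : ℝ) ^ 2)⁻¹) := by
  let h : ℕ → ℝ := fun p => (degreeOnePrimes K 1).indicator (rpowNegHom s) p + 2 * ((p : ℝ) ^ 2)⁻¹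
  have h_nonneg (p : ℕ) : 0 ≤ h p := add_nonneg
    (Set.indicator_nonneg (fun _ _ => rpowNegHom_nonneg s _) p) (by positivity)
  have summable_rpow := (summable_rpowNegHom hs).indicator (degreeOnePrimes K 1)
  have summable_sq : Summable fun n : ℕ => 2 * ((n : ℝ) ^ 2)⁻¹ :=
    (Real.summable_nat_pow_inv.mpr one_lt_two).mul_left 2
  let char : Ideal (𝓞 K) → ℕ := fun I => Ideal.absNorm (I.under ℤ)
  calc ∑ I ∈ G, (absNormRpow K s I + 2 * absNormRpow K s I ^ 2)
      ≤ ∑ I ∈ G, h (char I) := Finset.sum_le_sum fun I hI => absNormRpow_add_sq_le hs (hG I hI)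
    _ = ∑ p ∈ G.image char, ({I ∈ G | char I = p}.card : ℝ) * h p := by
        simp only [Finset.sum_comp h char, nsmul_eq_mul]
    _ ≤ ∑ p ∈ G.image char, Module.finrank ℚ K * h p := by
        refine Finset.sum_le_sum fun p _ => mul_le_mul_of_nonneg_right ?_ (h_nonneg p)
        have card_le : {I ∈ G | char I = p}.card ≤ Module.finrank ℚ K :=
          card_le_finrank_of_absNorm_under_eq fun I hI =>
            ⟨hG I (Finset.mem_filter.mp hI).1, (Finset.mem_filter.mp hI).2⟩
        exact mod_cast card_le
    _ ≤ Module.finrank ℚ K * ∑' p, h p := by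
        rw [← Finset.mul_sum]
        gcongr
        exact (summable_rpow.add summable_sq).sum_le_tsum _ fun p _ => h_nonneg p
    _ = _ := by rw [summable_rpow.tsum_add summable_sq, tsum_mul_left, dirichletSum]

variable (K)

theorem hasLowerDensity_degreeOnePrimes :
    HasLowerDensity (degreeOnePrimes K 1) (Module.finrank ℚ K : ℝ)⁻¹ := by
  obtain ⟨C, hC⟩ := exists_abs_log_tsum_absNormRpow_le K
  have finrank_pos : (0 : ℝ) < Module.finrank ℚ K := mod_cast Module.finrank_pos
  refine ⟨(Module.finrank ℚ K : ℝ)⁻¹ * (C + Real.log 2) + 2 * ∑' n : ℕ, ((n : ℝ) ^ 2)⁻¹, ?_⟩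
  filter_upwards [self_mem_nhdsWithin, hC, eventually_summable_absNormRpow K] with s (hs : 1 < s)
    le_log summable
  have absNormRpow_zero : absNormRpow K s 0 = 0 := by
    simp [absNormRpow_apply, rpowNegHom_apply, Real.zero_rpow (show -s ≠ 0 by linarith)]
  obtain ⟨G, hG, log_le⟩ := exists_log_tsum_le summable (absNormRpow_nonneg s) absNormRpow_zero
    fun _ => absNormRpow_prime_le_half hs
  have sum_le := sum_primes_absNormRpow_le hs hG
  have key : (Module.finrank ℚ K : ℝ)⁻¹ * (-Real.log (s - 1) - (C + Real.log 2)) ≤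
      dirichletSum (degreeOnePrimes K 1) s + 2 * ∑' n : ℕ, ((n : ℝ) ^ 2)⁻¹ := by
    rw [inv_mul_le_iff₀ finrank_pos]
    linarith [(abs_le.mp le_log).1]
  linarith

end DedekindZeta

section Density

open NumberField Topology

lemma dirichletSum_le_add_of_subset {A B D : Set ℕ} (h : A ⊆ B ∪ D) {s : ℝ} (hs : 1 < s) :
    dirichletSum A s ≤ dirichletSum B s + dirichletSum D s := by
  have summable := (summable_rpowNegHom hs).indicator
  rw [dirichletSum, dirichletSum, dirichletSum, ← (summable B).tsum_add (summable D)]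
  refine (summable A).tsum_le_tsum (fun m => ?_) ((summable B).add (summable D))
  have nonneg (m : ℕ) : 0 ≤ rpowNegHom s m := rpowNegHom_nonneg s m
  rw [← Set.indicator_union_add_inter_apply]
  exact (Set.indicator_le_indicator_of_subset h nonneg m).trans
    (le_add_of_nonneg_right (Set.indicator_nonneg (fun m _ => nonneg m) m))

lemma dirichletSum_coe_finset_le (F : Finset ℕ) {s : ℝ} (hs : 1 < s) :
    dirichletSum F s ≤ F.card := by
  rw [dirichletSum, ← sum_eq_tsum_indicator]
  refine (Finset.sum_le_card_nsmul _ _ 1 fun m _ => ?_).trans_eq (by simp)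
  exact (rpowNegHom_le_inv hs m).trans (Nat.cast_inv_le_one m)

lemma HasLowerDensity.of_le {A : Set ℕ} {δ ε : ℝ} (hA : HasLowerDensity A δ) (h : ε ≤ δ) :
    HasLowerDensity A ε := by
  obtain ⟨C, hC⟩ := hA
  refine ⟨C, ?_⟩
  filter_upwards [hC, Ioo_mem_nhdsGT one_lt_two] with s le_sum hs
  have log_nonpos : Real.log (s - 1) ≤ 0 :=
    Real.log_nonpos (by linarith [hs.1]) (by linarith [hs.2])
  exact (sub_le_sub_right (mul_le_mul_of_nonneg_right h (neg_nonneg.mpr log_nonpos)) C).trans le_sum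

lemma HasLowerDensity.of_subset_union_finset {A B : Set ℕ} {δ : ℝ} (hA : HasLowerDensity A δ)
    {F : Finset ℕ} (h : A ⊆ B ∪ F) : HasLowerDensity B δ := by
  obtain ⟨C, hC⟩ := hA
  refine ⟨C + F.card, ?_⟩
  filter_upwards [hC, self_mem_nhdsWithin] with s le_sum (hs : 1 < s)
  linarith [dirichletSum_le_add_of_subset h hs, dirichletSum_coe_finset_le F hs]

theorem hasLowerDensity_primes : HasLowerDensity {p | p.Prime} 1 := by
  have h := hasLowerDensity_degreeOnePrimes ℚ
  rw [Module.finrank_self, Nat.cast_one, inv_one] at h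
  exact h.of_subset_union_finset (F := ∅) fun p hp => .inl hp.1

/- Writing `d₁`, `d₂` for the densities of the primes with at least one, respectively two, prime
ideals of degree one above them, `d₁ + d₂ ≤ 1` while `1 ≤ d(A) + d₁`. -/
theorem hasLowerDensity_of_primes_subset_union {K : Type*} [Field K] [NumberField K] {δ : ℝ}
    (hδ : HasLowerDensity (degreeOnePrimes K 2) δ) {A : Set ℕ} {F : Finset ℕ}
    (h : {p | p.Prime} ⊆ (A ∪ degreeOnePrimes K 1) ∪ F) : HasLowerDensity A δ := by
  obtain ⟨C, hC⟩ := hδ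
  obtain ⟨C₁, hC₁⟩ := hasLowerDensity_primes
  obtain ⟨C₂, hC₂⟩ := exists_dirichletSum_degreeOnePrimes_add_le K
  refine ⟨C + C₁ + C₂ + F.card, ?_⟩
  filter_upwards [hC, hC₁, hC₂, self_mem_nhdsWithin] with s _ _ _ (hs : 1 < s)
  linarith [dirichletSum_le_add_of_subset h hs, dirichletSum_coe_finset_le F hs,
    dirichletSum_le_add_of_subset (Set.Subset.refl (A ∪ degreeOnePrimes K 1)) hs]

end Density

section KummerDedekind

open NumberField RingOfIntegers

/-- The primes modulo which `f` has no root. -/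
def noRootPrimes (f : ℤ[X]) : Set ℕ :=
  {p | p.Prime ∧ ∀ a : ZMod p, ¬ (f.map (Int.castRingHom (ZMod p))).IsRoot a}

lemma isRoot_map_castRingHom_of_aeval_eq_zero {R S : Type*} [CommRing R] [CommRing S]
    (φ : R →+* S) {θ : R} {f : ℤ[X]} (h : aeval θ f = 0) :
    (f.map (Int.castRingHom S)).IsRoot (φ θ) := by
  rw [IsRoot.def, eval_map, ← RingHom.ext_int (φ.comp (algebraMap ℤ R)) (Int.castRingHom S),
    ← hom_eval₂, ← aeval_def, h, map_zero]

lemma X_sub_C_mem_monicFactorsMod {K : Type*} [Field K] {θ : 𝓞 K} {p : ℕ} [Fact p.Prime]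
    {a : ZMod p} (ha : ((minpoly ℤ θ).map (Int.castRingHom (ZMod p))).IsRoot a) :
    X - C a ∈ monicFactorsMod θ p := by
  have ne_zero : (minpoly ℤ θ).map (Int.castRingHom (ZMod p)) ≠ 0 :=
    ((minpoly.monic θ.isIntegral).map _).ne_zero
  rw [Multiset.mem_toFinset, UniqueFactorizationMonoid.mem_normalizedFactors_iff' ne_zero]
  exact ⟨irreducible_X_sub_C a, (monic_X_sub_C a).normalize_eq_self, dvd_iff_isRoot.mpr ha⟩

variable {K : Type*} [Field K] [NumberField K]

lemma intCast_mem_conductor (B : PowerBasis ℚ K) {θ : 𝓞 K} (hθ : (θ : K) = B.gen) {D : ℤ}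
    (hD : (D : ℚ) = Algebra.discr ℚ B.basis) : (D : 𝓞 K) ∈ conductor ℤ θ := by
  rw [mem_conductor_iff]
  intro b
  have isIntegral_gen : IsIntegral ℤ B.gen := hθ ▸ θ.isIntegral_coe
  have mem_adjoin := Algebra.discr_mul_isIntegral_mem_adjoin ℚ isIntegral_gen b.isIntegral_coe
  have adjoin_gen : Algebra.adjoin ℤ {B.gen} =
      (Algebra.adjoin ℤ {θ}).map (IsScalarTower.toAlgHom ℤ (𝓞 K) K) := by
    rw [AlgHom.map_adjoin, Set.image_singleton, IsScalarTower.toAlgHom_apply, ← hθ]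
  rw [adjoin_gen, Subalgebra.mem_map] at mem_adjoin
  obtain ⟨c, hc, hcb⟩ := mem_adjoin
  have : (D : 𝓞 K) * b = c := by
    apply RingOfIntegers.coe_injective
    rw [← hD, Algebra.smul_def] at hcb
    simpa using hcb.symm
  rwa [this]

lemma exponent_ne_zero_of_powerBasis (B : PowerBasis ℚ K) {θ : 𝓞 K} (hθ : (θ : K) = B.gen) :
    exponent θ ≠ 0 := by
  have isIntegral_discr : IsIntegral ℤ (Algebra.discr ℚ B.basis) :=
    Algebra.discr_isIntegral ℚ fun i => by
      rw [PowerBasis.basis_eq_pow, ← hθ]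
      exact θ.isIntegral_coe.pow _
  obtain ⟨D, hD⟩ := IsIntegrallyClosed.isIntegral_iff.mp isIntegral_discr
  have mem_under : D ∈ Ideal.under ℤ (conductor ℤ θ) := by
    simpa [Ideal.under_def] using intCast_mem_conductor B hθ hD
  intro h
  rw [exponent, Ideal.absNorm_eq_zero_iff] at h
  rw [h, Ideal.mem_bot] at mem_under
  exact Algebra.discr_not_zero_of_basis ℚ B.basis (by rw [← hD, mem_under, map_zero])

lemma absNorm_primesOverSpanEquivMonicFactorsMod_symm {θ : 𝓞 K} {p : ℕ} [Fact p.Prime]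
    (hp : ¬ p ∣ exponent θ) {q : (ZMod p)[X]} (hq : q ∈ monicFactorsMod θ p) :
    Ideal.absNorm ((Ideal.primesOverSpanEquivMonicFactorsMod hp).symm ⟨q, hq⟩ : Ideal (𝓞 K)) =
      p ^ q.natDegree := by
  set Q := (Ideal.primesOverSpanEquivMonicFactorsMod hp).symm ⟨q, hq⟩ with hQ
  have liesOver : (Q : Ideal (𝓞 K)).LiesOver (Ideal.span {(p : ℤ)}) := Q.2.2
  have isPrime : (Q : Ideal (𝓞 K)).IsPrime := Q.2.1
  have isMaximal_span : (Ideal.span {(p : ℤ)}).IsMaximal := Int.ideal_span_isMaximal_of_prime p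
  have : (Q : Ideal (𝓞 K)).IsMaximal := .of_liesOver_isMaximal _ (Ideal.span {(p : ℤ)})
  rw [Ideal.absNorm_eq_pow_inertiaDeg' (p := p) (Q : Ideal (𝓞 K)) Fact.out,
    Ideal.inertiaDeg'_eq_inertiaDeg, hQ,
    Ideal.inertiaDeg_primesOverSpanEquivMonicFactorsMod_symm_apply' hp hq]

lemma card_roots_le_idealCount {θ : 𝓞 K} {p : ℕ} [Fact p.Prime] (hp : ¬ p ∣ exponent θ)
    {A : Finset (ZMod p)}
    (hA : ∀ a ∈ A, ((minpoly ℤ θ).map (Int.castRingHom (ZMod p))).IsRoot a) :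
    A.card ≤ idealCount K p := by
  have hmem (a : A) := X_sub_C_mem_monicFactorsMod (hA a a.2)
  let primeOfRoot (a : A) : {I : Ideal (𝓞 K) // Ideal.absNorm I = p} :=
    ⟨((Ideal.primesOverSpanEquivMonicFactorsMod hp).symm ⟨X - C a.1, hmem a⟩ : Ideal (𝓞 K)), by
      rw [absNorm_primesOverSpanEquivMonicFactorsMod_symm, natDegree_X_sub_C, pow_one]⟩
  have injective : Function.Injective primeOfRoot := by
    intro a b hab
    have primes_eq : (primeOfRoot a).1 = (primeOfRoot b).1 := congrArg Subtype.val hab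
    have factors_eq := (Ideal.primesOverSpanEquivMonicFactorsMod hp).symm.injective
      (Subtype.ext primes_eq)
    exact Subtype.ext (C_injective (sub_right_injective (congrArg Subtype.val factors_eq)))
  simpa [idealCount] using Nat.card_le_card_of_injective primeOfRoot injective

lemma exists_ringHom_ker_eq {I : Ideal (𝓞 K)} {p : ℕ} (hp : p.Prime) (hI : Ideal.absNorm I = p) :
    ∃ φ : 𝓞 K →+* ZMod p, RingHom.ker φ = I := by
  have card_quot : Nat.card (𝓞 K ⧸ I) = p := by
    rw [← hI, Ideal.absNorm_apply, Submodule.cardQuot_apply]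
  have : Finite (𝓞 K ⧸ I) := Nat.finite_of_card_ne_zero (card_quot ▸ hp.ne_zero)
  have := Fintype.ofFinite (𝓞 K ⧸ I)
  let e : ZMod p ≃+* 𝓞 K ⧸ I :=
    ZMod.ringEquivOfPrime _ hp (Nat.card_eq_fintype_card.symm.trans card_quot)
  refine ⟨(e.symm : (𝓞 K ⧸ I) →+* ZMod p).comp (Ideal.Quotient.mk I), ?_⟩
  rw [RingHom.ker_comp_of_injective _ e.symm.injective, Ideal.mk_ker]

lemma primes_subset_noRootPrimes_union {θ : 𝓞 K} (hθ : exponent θ ≠ 0) :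
    {p | p.Prime} ⊆
      (noRootPrimes (minpoly ℤ θ) ∪ degreeOnePrimes K 1) ∪ (exponent θ).primeFactors := by
  intro p (hp : p.Prime)
  have : Fact p.Prime := ⟨hp⟩
  by_cases hpe : p ∣ exponent θ
  · exact .inr (Nat.mem_primeFactors.mpr ⟨hp, hpe, hθ⟩)
  by_cases hroot : ∃ a : ZMod p, ((minpoly ℤ θ).map (Int.castRingHom (ZMod p))).IsRoot a
  · obtain ⟨a, ha⟩ := hroot
    refine .inl (.inr ⟨hp, ?_⟩)
    simpa using card_roots_le_idealCount hpe (A := {a}) (by simpa using ha)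
  · exact .inl (.inl ⟨hp, not_exists.mp hroot⟩)

lemma degreeOnePrimes_one_subset_two_union {L : Type*} [Field L] [NumberField L] {θ : 𝓞 K}
    (hθ : exponent θ ≠ 0) {θ₁ θ₂ : 𝓞 L} (hne : θ₁ ≠ θ₂) (h₁ : aeval θ₁ (minpoly ℤ θ) = 0)
    (h₂ : aeval θ₂ (minpoly ℤ θ) = 0) :
    degreeOnePrimes L 1 ⊆ degreeOnePrimes K 2 ∪
      ((exponent θ).primeFactors ∪ (Ideal.absNorm (Ideal.span {θ₁ - θ₂})).primeFactors :
        Finset ℕ) := by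
  rintro p ⟨hp, hcount⟩
  have : Fact p.Prime := ⟨hp⟩
  rw [Finset.coe_union]
  by_cases hpe : p ∣ exponent θ
  · exact .inr (.inl (Nat.mem_primeFactors.mpr ⟨hp, hpe, hθ⟩))
  obtain ⟨I, hI⟩ := (Nat.card_pos_iff.mp hcount).1
  obtain ⟨φ, hφ⟩ := exists_ringHom_ker_eq hp hI
  by_cases hroots : φ θ₁ = φ θ₂
  · refine .inr (.inr (Nat.mem_primeFactors.mpr ⟨hp, ?_, ?_⟩))
    · rw [← hI, ← hφ]
      refine Ideal.absNorm_dvd_absNorm_of_le ((Ideal.span_singleton_le_iff_mem _).mpr ?_)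
      rw [RingHom.mem_ker, map_sub, hroots, sub_self]
    · rw [Ne, Ideal.absNorm_eq_zero_iff, Ideal.span_singleton_eq_bot]
      exact sub_ne_zero.mpr hne
  · refine .inl ⟨hp, ?_⟩
    rw [← Finset.card_pair hroots]
    refine card_roots_le_idealCount hpe fun a ha => ?_
    rcases Finset.mem_insert.mp ha with rfl | ha
    · exact isRoot_map_castRingHom_of_aeval_eq_zero φ h₁
    · exact Finset.mem_singleton.mp ha ▸ isRoot_map_castRingHom_of_aeval_eq_zero φ h₂

lemma hasLowerDensity_noRootPrimes_minpoly {L : Type*} [Field L] [NumberField L] {θ : 𝓞 K}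
    (hθ : exponent θ ≠ 0) {θ₁ θ₂ : 𝓞 L} (hne : θ₁ ≠ θ₂) (h₁ : aeval θ₁ (minpoly ℤ θ) = 0)
    (h₂ : aeval θ₂ (minpoly ℤ θ) = 0) :
    HasLowerDensity (noRootPrimes (minpoly ℤ θ)) (Module.finrank ℚ L : ℝ)⁻¹ :=
  hasLowerDensity_of_primes_subset_union
    ((hasLowerDensity_degreeOnePrimes L).of_subset_union_finset
      (degreeOnePrimes_one_subset_two_union hθ hne h₁ h₂))
    (primes_subset_noRootPrimes_union hθ)

lemma exists_powerBasis_minpoly_eq {f : ℤ[X]} (hf : f.Monic)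
    (hirr : Irreducible (f.map (Int.castRingHom ℚ))) :
    ∃ (K : Type) (_ : Field K) (_ : NumberField K) (B : PowerBasis ℚ K) (θ : 𝓞 K),
      (θ : K) = B.gen ∧ minpoly ℤ θ = f := by
  let g : ℚ[X] := f.map (Int.castRingHom ℚ)
  have : Fact (Irreducible g) := ⟨hirr⟩
  let B := AdjoinRoot.powerBasis hirr.ne_zero
  have : FiniteDimensional ℚ (AdjoinRoot g) := B.finite
  have isIntegral_gen : IsIntegral ℤ B.gen := by
    refine ⟨f, hf, ?_⟩
    rw [← aeval_def, ← aeval_map_algebraMap ℚ]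
    exact AdjoinRoot.eval₂_root g
  let θ : 𝓞 (AdjoinRoot g) := ⟨B.gen, isIntegral_gen⟩
  refine ⟨AdjoinRoot g, inferInstance, ⟨⟩, B, θ, rfl, ?_⟩
  have minpoly_root := AdjoinRoot.minpoly_root hirr.ne_zero
  rw [(hf.map _).leadingCoeff, inv_one, map_one, mul_one] at minpoly_root
  refine map_injective _ (algebraMap ℤ ℚ).injective_int ?_
  rw [← minpoly.isIntegrallyClosed_eq_field_fractions ℚ (AdjoinRoot g) θ.isIntegral]
  exact minpoly_root

lemma exists_two_roots_of_monic {f : ℤ[X]} (hf : f.Monic)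
    (hsep : (f.map (Int.castRingHom ℚ)).Separable) (hdeg : 2 ≤ f.natDegree) :
    ∃ (L : Type) (_ : Field L) (_ : NumberField L) (θ₁ θ₂ : 𝓞 L),
      θ₁ ≠ θ₂ ∧ aeval θ₁ f = 0 ∧ aeval θ₂ f = 0 := by
  let g : ℚ[X] := f.map (Int.castRingHom ℚ)
  have one_lt_card : 1 < g.natDegree := (hf.natDegree_map (Int.castRingHom ℚ)).symm ▸ hdeg
  rw [← card_rootSet_eq_natDegree hsep (SplittingField.splits g)] at one_lt_card
  obtain ⟨x, y, hxy⟩ := Fintype.one_lt_card_iff.mp one_lt_card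
  have aeval_root (z : g.rootSet (SplittingField g)) : aeval z.1 f = 0 := by
    rw [← aeval_map_algebraMap ℚ]
    exact aeval_eq_zero_of_mem_rootSet z.2
  let θ (z : g.rootSet (SplittingField g)) : 𝓞 (SplittingField g) := ⟨z.1, f, hf, aeval_root z⟩
  have aeval_θ (z) : aeval (θ z) f = 0 := RingOfIntegers.coe_injective <| by
    rw [map_zero, ← aeval_algebraMap_apply]
    exact aeval_root z
  exact ⟨SplittingField g, inferInstance, ⟨⟩, θ x, θ y,
    fun h => hxy (Subtype.ext (congrArg RingOfIntegers.val h)), aeval_θ x, aeval_θ y⟩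

theorem exists_hasLowerDensity_noRootPrimes {f : ℤ[X]} (hf : f.Monic)
    (hirr : Irreducible (f.map (Int.castRingHom ℚ))) (hdeg : 2 ≤ f.natDegree) :
    ∃ δ > 0, HasLowerDensity (noRootPrimes f) δ := by
  obtain ⟨K, _, _, B, θ, hθ, rfl⟩ := exists_powerBasis_minpoly_eq hf hirr
  obtain ⟨L, _, _, θ₁, θ₂, hne, h₁, h₂⟩ := exists_two_roots_of_monic hf hirr.separable hdeg
  exact ⟨(Module.finrank ℚ L : ℝ)⁻¹, inv_pos.mpr (mod_cast Module.finrank_pos),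
    hasLowerDensity_noRootPrimes_minpoly (exponent_ne_zero_of_powerBasis B hθ) hne h₁ h₂⟩

end KummerDedekind

section ProjectiveRoots

/-- The primes modulo which `P` has no root on the projective line; the point at infinity is a root
if and only if the leading coefficient vanishes. -/
def noProjectiveRootPrimes (P : ℤ[X]) : Set ℕ :=
  {p | p ∈ noRootPrimes P ∧ ¬ (p : ℤ) ∣ P.leadingCoeff}

lemma noRootPrimes_integralNormalization_subset {P : ℤ[X]} (hdeg : 1 ≤ P.natDegree) :
    noRootPrimes P.integralNormalization ⊆
      noProjectiveRootPrimes P ∪ P.leadingCoeff.natAbs.primeFactors := by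
  rintro p ⟨hp, hroot⟩
  have leadingCoeff_ne_zero : P.leadingCoeff ≠ 0 :=
    leadingCoeff_ne_zero.mpr (ne_zero_of_natDegree_gt hdeg)
  by_cases hdvd : (p : ℤ) ∣ P.leadingCoeff
  · exact .inr (Nat.mem_primeFactors.mpr
      ⟨hp, Int.natCast_dvd.mp hdvd, Int.natAbs_ne_zero.mpr leadingCoeff_ne_zero⟩)
  · refine .inl ⟨⟨hp, fun a ha => hroot (Int.castRingHom (ZMod p) P.leadingCoeff * a) ?_⟩, hdvd⟩
    rw [IsRoot.def, eval_map] at ha ⊢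
    rw [integralNormalization_eval₂_leadingCoeff_mul hdeg, ha, mul_zero]

/- Over the field, the integral normalization of a polynomial `P` of degree `N` with leading
coefficient `c` is `c ^ (N - 1) * P (X / c)`. -/
lemma irreducible_map_integralNormalization {R k : Type*} [CommRing R] [Field k] {φ : R →+* k}
    (hφ : Function.Injective φ) {P : R[X]} (hirr : Irreducible (P.map φ)) :
    Irreducible (P.integralNormalization.map φ) := by
  have hdeg : 1 ≤ P.natDegree := natDegree_map_eq_of_injective hφ P ▸ hirr.natDegree_pos
  have hc : φ P.leadingCoeff ≠ 0 := (map_ne_zero_iff φ hφ).mpr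
    (leadingCoeff_ne_zero.mpr (ne_zero_of_natDegree_gt hdeg))
  let := invertibleOfNonzero hc
  have eval₂_C_comp : P.eval₂ (C.comp φ) X = P.map φ := rfl
  have substitution : algEquivCMulXAddC (φ P.leadingCoeff) 0 (P.integralNormalization.map φ) =
      C (φ P.leadingCoeff ^ (P.natDegree - 1)) * P.map φ := by
    simpa [algEquivCMulXAddC_apply, aeval_def, eval₂_map, algebraMap_eq, eval₂_C_comp] using
      integralNormalization_eval₂_leadingCoeff_mul (p := P) hdeg ((C : k →+* k[X]).comp φ) X
  rw [← MulEquiv.irreducible_iff (algEquivCMulXAddC (φ P.leadingCoeff) 0), substitution]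
  exact (irreducible_isUnit_mul (isUnit_C.mpr (pow_ne_zero _ hc).isUnit)).mpr hirr

theorem exists_hasLowerDensity_noProjectiveRootPrimes {P : ℤ[X]}
    (hirr : Irreducible (P.map (Int.castRingHom ℚ))) (hdeg : 2 ≤ P.natDegree) :
    ∃ δ > 0, HasLowerDensity (noProjectiveRootPrimes P) δ := by
  have hP : P ≠ 0 := ne_zero_of_natDegree_gt hdeg
  obtain ⟨δ, hδ, h⟩ := exists_hasLowerDensity_noRootPrimes (monic_integralNormalization hP)
    (irreducible_map_integralNormalization (Int.castRingHom ℚ).injective_int hirr)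
    (by rwa [natDegree_integralNormalization])
  exact ⟨δ, hδ, h.of_subset_union_finset
    (noRootPrimes_integralNormalization_subset (one_le_two.trans hdeg))⟩

lemma hasLowerDensity_noProjectiveRootPrimes_C {c : ℤ} (hc : c ≠ 0) :
    HasLowerDensity (noProjectiveRootPrimes (C c)) 1 := by
  refine hasLowerDensity_primes.of_subset_union_finset (F := c.natAbs.primeFactors) ?_
  intro p (hp : p.Prime)
  by_cases hdvd : (p : ℤ) ∣ c
  · exact .inr (Nat.mem_primeFactors.mpr ⟨hp, Int.natCast_dvd.mp hdvd, Int.natAbs_ne_zero.mpr hc⟩)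
  · refine .inl ⟨⟨hp, fun a ha => hdvd ?_⟩, by rwa [leadingCoeff_C]⟩
    rw [map_C, IsRoot.def, eval_C, eq_intCast] at ha
    exact (ZMod.intCast_zmod_eq_zero_iff_dvd c p).mp ha

end ProjectiveRoots

section Twists

lemma not_dvd_of_pow_eq {n : ℕ} (hn : n ≠ 0) {d : ℤ} (hd : NFree n d) {z : ℚ} {F : ℤ}
    (hz : z ^ n = d * F) {p : ℕ} (hp : p.Prime) (hF : ¬ (p : ℤ) ∣ F) : ¬ (p : ℤ) ∣ d := by
  intro hpd
  have hp' : Prime (p : ℤ) := Nat.prime_iff_prime_int.mp hp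
  have isIntegral_pow : IsIntegral ℤ (z ^ n) := by
    rw [hz, ← Int.cast_mul]
    exact isIntegral_algebraMap (R := ℤ) (A := ℚ)
  obtain ⟨w, rfl⟩ := IsIntegrallyClosed.exists_algebraMap_eq_of_isIntegral_pow
    (Nat.pos_of_ne_zero hn) isIntegral_pow
  have hw : w ^ n = d * F := by
    rw [algebraMap_int_eq, eq_intCast] at hz
    exact mod_cast hz
  have dvd_w : (p : ℤ) ∣ w := hp'.dvd_of_dvd_pow (hw ▸ hpd.mul_right F)
  have pow_dvd : (p : ℤ) ^ n ∣ d * F := hw ▸ pow_dvd_pow_of_dvd dvd_w n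
  exact hd.2.2 p hp ((hp'.coprime_iff_not_dvd.mpr hF).pow_left.dvd_of_dvd_mul_right pow_dvd)

/- `(P.scaleRoots b).eval a` is the value at `(a, b)` of the binary form attached to `P`. -/
lemma not_dvd_eval_scaleRoots {P : ℤ[X]} {p : ℕ} (hp : p ∈ noProjectiveRootPrimes P) {a b : ℤ}
    (hab : IsCoprime a b) : ¬ (p : ℤ) ∣ (P.scaleRoots b).eval a := by
  obtain ⟨⟨hp, hroot⟩, hlc⟩ := hp
  have : Fact p.Prime := ⟨hp⟩
  let φ := Int.castRingHom (ZMod p)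
  have φ_eq_zero_iff (c : ℤ) : φ c = 0 ↔ (p : ℤ) ∣ c := ZMod.intCast_zmod_eq_zero_iff_dvd c p
  rw [← φ_eq_zero_iff] at hlc ⊢
  rw [← eval₂_at_apply]
  by_cases hb : φ b = 0
  · have ha : φ a ≠ 0 := fun ha => hp.not_dvd_one <| by
      have := hab.isUnit_of_dvd' ((φ_eq_zero_iff a).mp ha) ((φ_eq_zero_iff b).mp hb)
      exact Int.natCast_dvd_natCast.mp (by simpa using this.dvd)
    rw [← eval_map, map_scaleRoots _ _ _ hlc, hb, scaleRoots_zero, eval_smul, smul_eq_mul, eval_pow,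
      eval_X, leadingCoeff_map_of_leadingCoeff_ne_zero _ hlc]
    exact mul_ne_zero hlc (pow_ne_zero _ ha)
  · rw [← mul_div_cancel₀ (φ a) hb, scaleRoots_eval₂_mul, ← eval_map]
    exact mul_ne_zero (pow_ne_zero _ hb) (hroot _)

lemma not_dvd_of_hasNontrivialPoint {n N : ℕ} (hn : n ≠ 0) (hdvd : n ∣ N) {P : ℤ[X]}
    (hdeg : P.natDegree = N) {d : ℤ} (hd : NFree n d) (h : HasNontrivialPoint n N P d) {p : ℕ}
    (hp : p ∈ noProjectiveRootPrimes P) : ¬ (p : ℤ) ∣ d := by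
  rcases h with ⟨t, y, -, hy⟩ | ⟨-, y, -, hy⟩
  · obtain ⟨m, rfl⟩ := hdvd
    have coprime : IsCoprime t.num t.den := Int.isCoprime_iff_gcd_eq_one.mpr t.reduced
    refine not_dvd_of_pow_eq hn hd (z := y * t.den ^ m) ?_ hp.1.1
      (not_dvd_eval_scaleRoots hp coprime)
    have eval_form : (((P.scaleRoots t.den).eval t.num : ℤ) : ℚ) =
        t.den ^ (n * m) * aeval t P := by
      have h := scaleRoots_eval₂_mul (p := P) (Int.castRingHom ℚ) t t.den
      have den_mul : Int.castRingHom ℚ t.den * t = Int.castRingHom ℚ t.num := by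
        simp [Rat.den_mul_eq_num]
      rw [den_mul, eval₂_at_apply, hdeg] at h
      simpa [aeval_def] using h
    rw [eval_form, mul_pow, hy, ← pow_mul, mul_comm m n]
    ring
  · exact not_dvd_of_pow_eq hn hd hy hp.1.1 hp.2

lemma ncard_le_two_mul_card_of_natAbs_mem {D : Set ℤ} {E : Finset ℕ}
    (h : ∀ d ∈ D, d.natAbs ∈ E) : D.ncard ≤ 2 * E.card := by
  have subset : D ⊆ (E.image (fun m : ℕ => (m : ℤ)) ∪ E.image (fun m : ℕ => -(m : ℤ)) :
      Finset ℤ) := by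
    intro d hd
    rw [Finset.coe_union, Finset.coe_image, Finset.coe_image]
    rcases Int.natAbs_eq d with h' | h'
    · exact .inl ⟨_, h d hd, h'.symm⟩
    · exact .inr ⟨_, h d hd, h'.symm⟩
  calc D.ncard ≤ _ := Set.ncard_le_ncard subset (Finset.finite_toSet _)
    _ ≤ (E.image _).card + (E.image _).card := by
        rw [Set.ncard_coe_finset]
        exact Finset.card_union_le _ _
    _ ≤ E.card + E.card := add_le_add Finset.card_image_le Finset.card_image_le
    _ = 2 * E.card := (two_mul _).symm

theorem exists_ncard_twists_isBigO {n N : ℕ} (hn : n ≠ 0) (hdvd : n ∣ N) {P : ℤ[X]}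
    (hdeg : P.natDegree = N) (hP : ∃ δ > 0, HasLowerDensity (noProjectiveRootPrimes P) δ) :
    ∃ α : ℝ, 0 < α ∧ α < 1 ∧
      (fun x : ℕ => ({d : ℤ | NFree n d ∧ |d| ≤ (x : ℤ) ∧ HasNontrivialPoint n N P d}.ncard : ℝ))
        =O[atTop] fun x : ℕ => (x : ℝ) * Real.log x ^ (-α) := by
  obtain ⟨δ, hδ, h⟩ := hP
  refine ⟨min δ (1 / 2), lt_min hδ one_half_pos, (min_le_right _ _).trans_lt one_half_lt_one, ?_⟩
  have sifted_isBigO := card_sifted_isBigO (fun p hp => hp.1.1) (h.of_le (min_le_left δ (1 / 2)))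
  refine IsBigO.trans (IsBigO.of_bound 2 (.of_forall fun x => ?_)) sifted_isBigO
  have le_two_mul : {d : ℤ | NFree n d ∧ |d| ≤ (x : ℤ) ∧ HasNontrivialPoint n N P d}.ncard ≤
      2 * (sifted (noProjectiveRootPrimes P) x).card := by
    refine ncard_le_two_mul_card_of_natAbs_mem fun d ⟨hd, hdx, hpt⟩ => mem_sifted.mpr ⟨⟨?_, ?_⟩, ?_⟩
    · exact Int.natAbs_pos.mpr hd.1
    · exact Int.ofNat_le.mp (Int.abs_eq_natAbs d ▸ hdx)
    · exact fun p hp hpd =>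
        not_dvd_of_hasNontrivialPoint hn hdvd hdeg hd hpt hp (Int.natCast_dvd.mpr hpd)
  rw [Real.norm_natCast, Real.norm_natCast]
  exact mod_cast le_two_mul

end Twists

section Counting

open scoped Pointwise

lemma mahlerMeasure_le_of_heightLE {P : ℤ[X]} {H : ℕ} (h : HeightLE P H) :
    (P.map (Int.castRingHom ℂ)).mahlerMeasure ≤ (P.natDegree + 1) * H := by
  refine (mahlerMeasure_le_sum_norm_coeff _).trans ?_
  rw [sum_over_range _ (fun _ => norm_zero),
    natDegree_map_eq_of_injective (Int.castRingHom ℂ).injective_int]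
  refine (Finset.sum_le_card_nsmul _ _ (H : ℝ) fun i _ => ?_).trans ?_
  · rw [coeff_map, eq_intCast, Complex.norm_intCast]
    exact_mod_cast h i
  · simp

lemma isUnit_of_dvd_of_isPrimitive {R : Type*} [CommSemiring R] {P Q : R[X]}
    (hP : P.IsPrimitive) (hQ : Q ∣ P) (hdeg : Q.natDegree = 0) : IsUnit Q := by
  obtain ⟨c, rfl⟩ := natDegree_eq_zero.mp hdeg
  exact isUnit_C.mpr (hP c hQ)

lemma irreducible_map_of_irreducible_primPart {P : ℤ[X]} (hP : P ≠ 0)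
    (h : Irreducible P.primPart) : Irreducible (P.map (Int.castRingHom ℚ)) := by
  rw [IsPrimitive.Int.irreducible_iff_irreducible_map_cast P.isPrimitive_primPart] at h
  have hcontent : IsUnit (C (Int.castRingHom ℚ P.content)) :=
    isUnit_C.mpr (IsUnit.mk0 _ (by simpa [content_eq_zero_iff] using hP))
  rw [P.eq_C_content_mul_primPart, Polynomial.map_mul, map_C]
  exact (irreducible_isUnit_mul hcontent).mpr h

lemma exists_eq_mul_of_not_irreducible_map {P : ℤ[X]} (hdeg : P.natDegree ≠ 0)
    (hred : ¬ Irreducible (P.map (Int.castRingHom ℚ))) :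
    ∃ Q R : ℤ[X], P = Q * R ∧ Q.natDegree ≠ 0 ∧ R.natDegree ≠ 0 := by
  have hP : P ≠ 0 := ne_zero_of_natDegree_gt hdeg.bot_lt
  have hunit : ¬ IsUnit P.primPart := fun h =>
    hdeg (P.natDegree_primPart ▸ natDegree_eq_zero_of_isUnit h)
  have hprim : ¬ Irreducible P.primPart := mt (irreducible_map_of_irreducible_primPart hP) hred
  simp only [irreducible_iff, hunit, not_false_eq_true, true_and, not_forall, not_or] at hprim
  obtain ⟨Q, R, hQR, hQ, hR⟩ := hprim
  refine ⟨C P.content * Q, R, ?_, ?_, ?_⟩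
  · rw [mul_assoc, ← hQR, ← P.eq_C_content_mul_primPart]
  · rw [natDegree_C_mul (mt content_eq_zero_iff.mp hP)]
    exact mt (isUnit_of_dvd_of_isPrimitive P.isPrimitive_primPart (Dvd.intro R hQR.symm)) hQ
  · exact mt (isUnit_of_dvd_of_isPrimitive P.isPrimitive_primPart (Dvd.intro_left Q hQR.symm)) hR

/-- The integer polynomials of degree at most `k` and Mahler measure at most `B`. -/
def mahlerBox (k : ℕ) (B : ℝ) : Set ℤ[X] :=
  {Q | Q.natDegree ≤ k ∧ (Q.map (Int.castRingHom ℂ)).mahlerMeasure ≤ B}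

lemma finite_mahlerBox (k : ℕ) (B : ℝ) : (mahlerBox k B).Finite :=
  (finite_mahlerMeasure_le k B.toNNReal).subset fun _ hQ =>
    ⟨hQ.1, hQ.2.trans (Real.le_coe_toNNReal B)⟩

lemma ncard_mahlerBox_le (k : ℕ) {B : ℝ} (hB : 1 ≤ B) :
    ((mahlerBox k B).ncard : ℝ) ≤ (3 * 2 ^ k * B) ^ (k + 1) := by
  lift B to NNReal using zero_le_one.trans hB
  have hfactor (i : Fin (k + 1)) : ((2 * ⌊k.choose i * B⌋₊ + 1 : ℕ) : ℝ) ≤ 3 * 2 ^ k * B := by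
    have hfloor : (⌊k.choose i * B⌋₊ : ℝ) ≤ k.choose i * B := by
      exact_mod_cast Nat.floor_le (zero_le (a := k.choose i * B))
    have hchoose : (k.choose i : ℝ) * B ≤ 2 ^ k * B := by
      gcongr
      exact_mod_cast Nat.choose_le_two_pow k i
    have hone : 1 ≤ (2 : ℝ) ^ k * B := one_le_mul_of_one_le_of_one_le (one_le_pow₀ one_le_two) hB
    push_cast
    linarith
  calc ((mahlerBox k B).ncard : ℝ)
      ≤ ∏ i : Fin (k + 1), ((2 * ⌊k.choose i * B⌋₊ + 1 : ℕ) : ℝ) :=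
        mod_cast card_mahlerMeasure_le_prod k B
    _ ≤ ∏ _i : Fin (k + 1), (3 * 2 ^ k * B : ℝ) :=
        Finset.prod_le_prod (fun _ _ => Nat.cast_nonneg _) fun i _ => hfactor i
    _ = (3 * 2 ^ k * B) ^ (k + 1) := by
        rw [Finset.prod_const, Finset.card_univ, Fintype.card_fin]

lemma ncard_mul_le {M : Type*} [Mul M] {s t : Set M} (hs : s.Finite) (ht : t.Finite) :
    (s * t).ncard ≤ s.ncard * t.ncard := by
  rw [← Set.image_mul_prod, ← Set.ncard_prod]
  exact Set.ncard_image_le (hs.prod ht)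

lemma ncard_mahlerBox_mul_mahlerBox_le {k l : ℕ} {a b : ℝ} (hk : k ≠ 0) (hl : l ≠ 0)
    (ha : 1 ≤ a) (hb : 1 ≤ b) :
    ((mahlerBox k a * mahlerBox l b).ncard : ℝ) ≤
      (3 * 2 ^ (k + l)) ^ (k + l + 2) * (a * b) ^ (k + l) :=
  calc ((mahlerBox k a * mahlerBox l b).ncard : ℝ)
      ≤ (mahlerBox k a).ncard * (mahlerBox l b).ncard :=
        mod_cast ncard_mul_le (finite_mahlerBox k a) (finite_mahlerBox l b)
    _ ≤ (3 * 2 ^ k * a) ^ (k + 1) * (3 * 2 ^ l * b) ^ (l + 1) := by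
        gcongr <;> exact ncard_mahlerBox_le _ ‹_›
    _ ≤ (3 * 2 ^ (k + l) * a) ^ (k + 1) * (3 * 2 ^ (k + l) * b) ^ (l + 1) := by
        gcongr <;> first | exact one_le_two | omega
    _ = (3 * 2 ^ (k + l)) ^ (k + l + 2) * (a ^ (k + 1) * b ^ (l + 1)) := by ring
    _ ≤ (3 * 2 ^ (k + l)) ^ (k + l + 2) * (a ^ (k + l) * b ^ (k + l)) := by
        gcongr ?_ * (?_ * ?_)
        · exact pow_le_pow_right₀ ha (by omega)
        · exact pow_le_pow_right₀ hb (by omega)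
    _ = (3 * 2 ^ (k + l)) ^ (k + l + 2) * (a * b) ^ (k + l) := by rw [mul_pow a b]

lemma exists_two_pow_dyadic {x y : ℝ} {Y : ℕ} (hx : 1 ≤ x) (hy : 1 ≤ y) (hxy : x * y ≤ Y) :
    ∃ j ≤ Nat.log 2 Y, x ≤ 2 ^ (j + 1) ∧ y ≤ Y / 2 ^ j := by
  obtain ⟨j, hjx, hxj⟩ := exists_nat_pow_near hx one_lt_two
  refine ⟨j, Nat.le_log_of_pow_le one_lt_two ?_, hxj.le, ?_⟩
  · have : (2 : ℝ) ^ j ≤ Y := hjx.trans ((le_mul_of_one_le_right (by positivity) hy).trans hxy)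
    exact_mod_cast this
  · rw [le_div_iff₀' (by positivity)]
    exact (mul_le_mul_of_nonneg_right hjx (by positivity)).trans hxy

/-- The integer polynomials of degree `N` and height at most `H`. -/
def heightBox (N H : ℕ) : Set ℤ[X] := {P | P.natDegree = N ∧ P ≠ 0 ∧ HeightLE P H}

lemma finite_heightBox (N H : ℕ) : (heightBox N H).Finite := by
  refine (finite_mahlerBox N ((N + 1) * H)).subset ?_
  rintro P ⟨rfl, -, hP⟩
  exact ⟨le_rfl, mahlerMeasure_le_of_heightLE hP⟩

lemma pow_le_ncard_heightBox (N H : ℕ) : H ^ (N + 1) ≤ (heightBox N H).ncard := by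
  have hcard : (boxPoly N (fun _ => 1) fun _ => H).ncard = H ^ (N + 1) := by
    simp [ncard_boxPoly]
  rw [← hcard]
  refine Set.ncard_le_ncard (fun P hP => ?_) (finite_heightBox N H)
  have hcoeff (i : ℕ) (hi : i ≤ N) : 1 ≤ P.coeff i ∧ P.coeff i ≤ H := by
    have h := hP.2 ⟨i, Nat.lt_succ_of_le hi⟩
    dsimp only at h
    exact_mod_cast h
  have hlead : P.coeff N ≠ 0 := (zero_lt_one.trans_le (hcoeff N le_rfl).1).ne'
  refine ⟨natDegree_eq_of_le_of_coeff_ne_zero hP.1 hlead, fun h => hlead (by rw [h, coeff_zero]),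
    fun i => ?_⟩
  rcases le_or_gt i N with hi | hi
  · rw [abs_of_pos (zero_lt_one.trans_le (hcoeff i hi).1)]
    exact (hcoeff i hi).2
  · rw [coeff_eq_zero_of_natDegree_lt (hP.1.trans_lt hi), abs_zero]
    exact Int.natCast_nonneg H

/-- The members of `heightBox N H` that are reducible over `ℚ`. -/
def reducibleBox (N H : ℕ) : Set ℤ[X] :=
  {P ∈ heightBox N H | ¬ Irreducible (P.map (Int.castRingHom ℚ))}

lemma reducibleBox_subset_biUnion {N : ℕ} (hN : N ≠ 0) (H : ℕ) :
    reducibleBox N H ⊆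
      ⋃ kj ∈ Finset.Ico 1 N ×ˢ Finset.range (Nat.log 2 ((N + 1) * H) + 1),
        mahlerBox kj.1 (2 ^ (kj.2 + 1)) *
          mahlerBox (N - kj.1) (((N + 1) * H : ℕ) / 2 ^ kj.2) := by
  rintro P ⟨⟨rfl, hP, hheight⟩, hred⟩
  obtain ⟨Q, R, rfl, hQ, hR⟩ := exists_eq_mul_of_not_irreducible_map hN hred
  have hQR := mahlerMeasure_le_of_heightLE hheight
  rw [Polynomial.map_mul, mahlerMeasure_mul] at hQR
  obtain ⟨hQ0, hR0⟩ := mul_ne_zero_iff.mp hP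
  obtain ⟨j, hj, hQj, hRj⟩ := exists_two_pow_dyadic (one_le_mahlerMeasure_of_ne_zero hQ0)
    (one_le_mahlerMeasure_of_ne_zero hR0) (Y := ((Q * R).natDegree + 1) * H) (mod_cast hQR)
  have hdeg := natDegree_mul hQ0 hR0
  refine Set.mem_biUnion (x := (Q.natDegree, j)) ?_
    (Set.mul_mem_mul ⟨le_rfl, hQj⟩ ⟨by dsimp only; omega, hRj⟩)
  simp only [Finset.coe_product, Set.mem_prod, Finset.mem_coe, Finset.mem_Ico, Finset.mem_range]
  omega

lemma ncard_reducibleBox_le {N H : ℕ} (hN : N ≠ 0) (hH : H ≠ 0) :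
    ((reducibleBox N H).ncard : ℝ) ≤ N * (Nat.log 2 ((N + 1) * H) + 1) *
      ((3 * 2 ^ N) ^ (N + 2) * (2 * ((N + 1) * H)) ^ N) := by
  set Y := (N + 1) * H with hY
  set ι := Finset.Ico 1 N ×ˢ Finset.range (Nat.log 2 Y + 1) with hι
  set cell : ℕ × ℕ → Set ℤ[X] := fun kj =>
    mahlerBox kj.1 (2 ^ (kj.2 + 1)) * mahlerBox (N - kj.1) (Y / 2 ^ kj.2)
  have hcard : ι.card ≤ N * (Nat.log 2 Y + 1) := by
    rw [hι, Finset.card_product, Nat.card_Ico, Finset.card_range]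
    gcongr
    exact N.sub_le 1
  have hbound : ∀ kj ∈ ι, ((cell kj).ncard : ℝ) ≤ (3 * 2 ^ N) ^ (N + 2) * (2 * Y) ^ N := by
    rintro ⟨k, j⟩ hkj
    simp only [hι, Finset.mem_product, Finset.mem_Ico, Finset.mem_range] at hkj
    have hjY : (2 : ℝ) ^ j ≤ Y := by
      exact_mod_cast Nat.pow_le_of_le_log (by positivity) (Nat.lt_succ_iff.mp hkj.2)
    have h := ncard_mahlerBox_mul_mahlerBox_le (k := k) (l := N - k) (a := 2 ^ (j + 1))
      (b := Y / 2 ^ j) (by omega) (by omega) (one_le_pow₀ one_le_two)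
      ((one_le_div (by positivity)).mpr hjY)
    have hab : (2 : ℝ) ^ (j + 1) * (Y / 2 ^ j) = 2 * Y := by field_simp; ring
    rwa [Nat.add_sub_cancel' hkj.1.2.le, hab] at h
  have hunion : (reducibleBox N H).ncard ≤ ∑ kj ∈ ι, (cell kj).ncard :=
    (Set.ncard_le_ncard (reducibleBox_subset_biUnion hN H) (ι.finite_toSet.biUnion fun kj _ =>
      (finite_mahlerBox _ _).mul (finite_mahlerBox _ _))).trans (ι.set_ncard_biUnion_le cell)
  calc ((reducibleBox N H).ncard : ℝ)
      ≤ ∑ kj ∈ ι, ((cell kj).ncard : ℝ) := mod_cast hunion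
    _ ≤ ι.card * ((3 * 2 ^ N) ^ (N + 2) * (2 * Y) ^ N) := by
        rw [← nsmul_eq_mul]
        exact Finset.sum_le_card_nsmul _ _ _ hbound
    _ ≤ (N * (Nat.log 2 Y + 1) : ℕ) * ((3 * 2 ^ N) ^ (N + 2) * (2 * Y) ^ N) := by gcongr
    _ = _ := by rw [hY]; push_cast; ring

lemma natLog_mul_add_one_isBigO (c : ℕ) :
    (fun H : ℕ => (Nat.log 2 (c * H) + 1 : ℝ)) =O[atTop] fun H : ℕ => Real.log H := by
  refine IsBigO.of_bound (3 / Real.log 2) ?_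
  filter_upwards [eventually_ge_atTop c, eventually_ge_atTop 2] with H hcH hH
  have hlog : Real.log 2 ≤ Real.log H := Real.log_le_log two_pos (mod_cast hH)
  have hlog2 : 0 < Real.log 2 := Real.log_pos one_lt_two
  have hnatLog : (Nat.log 2 (c * H) : ℝ) ≤ 2 * Real.log H / Real.log 2 :=
    calc (Nat.log 2 (c * H) : ℝ) ≤ Nat.log 2 (H ^ 2) := by
          rw [sq]
          gcongr
      _ ≤ Real.logb 2 (H ^ 2 : ℕ) := Real.natLog_le_logb _ _
      _ = 2 * Real.log H / Real.log 2 := by rw [Nat.cast_pow, Real.logb, Real.log_pow]; norm_num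
  have hone : 1 ≤ Real.log H / Real.log 2 := (one_le_div hlog2).mpr hlog
  rw [Real.norm_of_nonneg (by positivity), Real.norm_of_nonneg (hlog2.le.trans hlog)]
  calc (Nat.log 2 (c * H) + 1 : ℝ)
      ≤ 2 * Real.log H / Real.log 2 + Real.log H / Real.log 2 := add_le_add hnatLog hone
    _ = 3 / Real.log 2 * Real.log H := by ring

lemma ncard_reducibleBox_isBigO {N : ℕ} (hN : N ≠ 0) :
    (fun H : ℕ => ((reducibleBox N H).ncard : ℝ)) =O[atTop]
      fun H : ℕ => Real.log H * (H : ℝ) ^ N := by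
  have hbound : (fun H : ℕ => ((reducibleBox N H).ncard : ℝ)) =O[atTop] fun H : ℕ =>
      (Nat.log 2 ((N + 1) * H) + 1 : ℝ) * (H : ℝ) ^ N := by
    refine IsBigO.of_bound (N * ((3 * 2 ^ N) ^ (N + 2) * (2 * (N + 1)) ^ N)) ?_
    filter_upwards [eventually_ne_atTop 0] with H hH
    rw [Real.norm_of_nonneg (by positivity), Real.norm_of_nonneg (by positivity)]
    refine (ncard_reducibleBox_le hN hH).trans_eq ?_
    rw [← mul_assoc 2, mul_pow _ (H : ℝ)]
    ring
  exact hbound.trans ((natLog_mul_add_one_isBigO (N + 1)).mul (isBigO_refl _ _))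

lemma one_sub_div_isBigO {ι : Type*} {l : Filter ι} {I T R g : ι → ℝ} (hg : ∀ᶠ i in l, 0 < g i)
    (hIT : ∀ᶠ i in l, I i ≤ T i) (hTIR : ∀ᶠ i in l, T i ≤ I i + R i)
    (hgIR : ∀ᶠ i in l, g i ≤ I i + R i) (hR : R =o[l] g) :
    (fun i => 1 - I i / T i) =O[l] fun i => R i / g i := by
  refine IsBigO.of_bound 2 ?_
  filter_upwards [hg, hIT, hTIR, hgIR, hR.bound one_half_pos] with i hg hIT hTIR hgIR hR
  rw [Real.norm_of_nonneg (r := R i) (by linarith), Real.norm_of_nonneg hg.le] at hR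
  have hT : g i / 2 ≤ T i := by linarith
  have hT0 : 0 < T i := (half_pos hg).trans_le hT
  rw [one_sub_div hT0.ne', Real.norm_of_nonneg (div_nonneg (by linarith) hT0.le),
    Real.norm_of_nonneg (div_nonneg (by linarith) hg.le)]
  calc (T i - I i) / T i ≤ R i / (g i / 2) :=
        div_le_div₀ (by linarith) (by linarith) (half_pos hg) hT
    _ = 2 * (R i / g i) := by ring

/-- The members of `𝒫(n,N)` that are irreducible over `ℚ`. -/
def irredSet (n N : ℕ) : Set ℤ[X] :=
  {P ∈ PolySet n N | Irreducible (P.map (Int.castRingHom ℚ))}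

lemma mem_polySet_of_irreducible {n : ℕ} (hn : 2 ≤ n) {P : ℤ[X]}
    (hirr : Irreducible (P.map (Int.castRingHom ℚ))) : P ∈ PolySet n P.natDegree := by
  refine ⟨rfl, fun h => hirr.ne_zero (by rw [h, Polynomial.map_zero]), fun z => ?_⟩
  have hsep : (P.map (Int.castRingHom ℂ)).Separable := by
    have h := hirr.separable.map (f := algebraMap ℚ ℂ)
    rwa [Polynomial.map_map, RingHom.ext_int ((algebraMap ℚ ℂ).comp (Int.castRingHom ℚ))
      (Int.castRingHom ℂ)] at h
  exact (rootMultiplicity_le_one_of_separable hsep z).trans (by omega)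

lemma polySet_inter_subset_heightBox (n N H : ℕ) :
    PolySet n N ∩ {P | HeightLE P H} ⊆ heightBox N H :=
  fun _ hP => ⟨hP.1.1, hP.1.2.1, hP.2⟩

lemma irredSet_inter_subset (n N H : ℕ) :
    irredSet n N ∩ {P | HeightLE P H} ⊆ PolySet n N ∩ {P | HeightLE P H} :=
  fun _ hP => ⟨hP.1.1, hP.2⟩

lemma heightBox_subset_irredSet_union {n : ℕ} (hn : 2 ≤ n) (N H : ℕ) :
    heightBox N H ⊆ irredSet n N ∩ {P | HeightLE P H} ∪ reducibleBox N H := by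
  intro P hP
  by_cases hirr : Irreducible (P.map (Int.castRingHom ℚ))
  · exact Or.inl ⟨⟨hP.1 ▸ mem_polySet_of_irreducible hn hirr, hirr⟩, hP.2.2⟩
  · exact Or.inr ⟨hP, hirr⟩

lemma ncard_heightBox_le {n : ℕ} (hn : 2 ≤ n) (N H : ℕ) :
    (heightBox N H).ncard ≤
      (irredSet n N ∩ {P | HeightLE P H}).ncard + (reducibleBox N H).ncard := by
  refine (Set.ncard_le_ncard (heightBox_subset_irredSet_union hn N H) ?_).trans
    (Set.ncard_union_le _ _)
  have hfin := finite_heightBox N H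
  exact (hfin.subset ((irredSet_inter_subset n N H).trans
    (polySet_inter_subset_heightBox n N H))).union (hfin.subset fun _ hP => hP.1)

lemma one_sub_irredSet_density_isBigO {n N : ℕ} (hn : 2 ≤ n) (hN : N ≠ 0) :
    (fun H : ℕ => 1 - ((irredSet n N ∩ {P | HeightLE P H}).ncard : ℝ) /
        ((PolySet n N ∩ {P | HeightLE P H}).ncard : ℝ)) =O[atTop]
      fun H : ℕ => Real.log H / H := by
  have hpoly (H : ℕ) := polySet_inter_subset_heightBox n N H
  have hfin (H : ℕ) := finite_heightBox N H
  have hred := ncard_reducibleBox_isBigO hN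
  have hsmall : (fun H : ℕ => Real.log H * (H : ℝ) ^ N) =o[atTop]
      fun H : ℕ => (H : ℝ) ^ (N + 1) := by
    simp only [pow_succ']
    exact (Real.isLittleO_log_id_atTop.comp_tendsto tendsto_natCast_atTop_atTop).mul_isBigO
      (isBigO_refl _ _)
  have hratio := one_sub_div_isBigO (l := atTop)
    (I := fun H : ℕ => ((irredSet n N ∩ {P | HeightLE P H}).ncard : ℝ))
    (T := fun H : ℕ => ((PolySet n N ∩ {P | HeightLE P H}).ncard : ℝ))
    (R := fun H : ℕ => ((reducibleBox N H).ncard : ℝ)) (g := fun H : ℕ => (H : ℝ) ^ (N + 1))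
    (by filter_upwards [eventually_gt_atTop 0] with H hH using by positivity)
    (.of_forall fun H => mod_cast
      Set.ncard_le_ncard (irredSet_inter_subset n N H) ((hfin H).subset (hpoly H)))
    (.of_forall fun H => mod_cast
      (Set.ncard_le_ncard (hpoly H) (hfin H)).trans (ncard_heightBox_le hn N H))
    (.of_forall fun H => mod_cast
      (pow_le_ncard_heightBox N H).trans (ncard_heightBox_le hn N H))
    (hred.trans_isLittleO hsmall)
  have hdiv : (fun H : ℕ => ((reducibleBox N H).ncard : ℝ) / (H : ℝ) ^ (N + 1)) =O[atTop]
      fun H : ℕ => Real.log H * (H : ℝ) ^ N / (H : ℝ) ^ (N + 1) := by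
    simpa only [div_eq_mul_inv] using
      hred.mul (isBigO_refl (fun H : ℕ => ((H : ℝ) ^ (N + 1))⁻¹) atTop)
  refine (hratio.trans hdiv).trans_eventuallyEq ?_
  filter_upwards [eventually_gt_atTop 0] with H hH
  rw [pow_succ, mul_comm ((H : ℝ) ^ N), mul_div_mul_right _ _ (by positivity)]

lemma log_div_self_isBigO_log_div_sqrt :
    (fun H : ℕ => Real.log H / H) =O[atTop] fun H : ℕ => Real.log H / Real.sqrt H := by
  refine IsBigO.of_bound' ?_
  filter_upwards [eventually_ge_atTop 1] with H hH
  have hH' : (1 : ℝ) ≤ H := mod_cast hH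
  have hsqrt : Real.sqrt H ≤ H := Real.sqrt_le_iff.mpr ⟨by positivity, le_self_pow₀ hH' two_ne_zero⟩
  rw [norm_div, norm_div, Real.norm_of_nonneg (Real.sqrt_nonneg _), Real.norm_natCast]
  gcongr

lemma one_sub_polySet_zero_density_isBigO (n : ℕ) (g : ℕ → ℝ) :
    (fun H : ℕ => 1 - ((PolySet n 0 ∩ {P | HeightLE P H}).ncard : ℝ) /
      ((PolySet n 0 ∩ {P | HeightLE P H}).ncard : ℝ)) =O[atTop] g := by
  refine EventuallyEq.trans_isBigO ?_ (isBigO_zero g atTop)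
  filter_upwards [eventually_ge_atTop 1] with H hH
  have hfin := (finite_heightBox 0 H).subset (polySet_inter_subset_heightBox n 0 H)
  have hone : (1 : ℤ[X]) ∈ PolySet n 0 ∩ {P | HeightLE P H} := by
    refine ⟨⟨natDegree_one, one_ne_zero, fun z => ?_⟩, fun i => ?_⟩
    · rw [Polynomial.map_one, ← C_1, rootMultiplicity_C]
      exact Nat.zero_le _
    · rw [coeff_one]
      split_ifs <;> simp [hH]
  have hpos := (Set.ncard_pos hfin).mpr ⟨1, hone⟩
  rw [div_self (by positivity), sub_self]

end Counting

theorem stmt0 (n N : ℕ) (hn : 2 ≤ n) (hdvd : n ∣ N) :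
    ∃ S' ⊆ PolySet n N,
      ((fun H : ℕ => (1 : ℝ) -
          ((S' ∩ {P | HeightLE P H}).ncard : ℝ) /
            ((PolySet n N ∩ {P | HeightLE P H}).ncard : ℝ)) =O[atTop]
        fun H : ℕ => Real.log H / Real.sqrt H) ∧
      ∀ P ∈ S', ∃ α : ℝ, 0 < α ∧ α < 1 ∧
        (fun x : ℕ =>
            ({d : ℤ | NFree n d ∧ |d| ≤ (x : ℤ) ∧
              HasNontrivialPoint n N P d}.ncard : ℝ)) =O[atTop]
          fun x : ℕ => (x : ℝ) * Real.log x ^ (-α) := by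
  have hn0 : n ≠ 0 := by omega
  rcases eq_or_ne N 0 with rfl | hN
  · refine ⟨PolySet n 0, subset_rfl, one_sub_polySet_zero_density_isBigO n _, ?_⟩
    rintro P ⟨hdeg, hP0, -⟩
    obtain ⟨c, rfl⟩ := natDegree_eq_zero.mp hdeg
    exact exists_ncard_twists_isBigO hn0 hdvd hdeg
      ⟨1, one_pos, hasLowerDensity_noProjectiveRootPrimes_C (C_ne_zero.mp hP0)⟩
  · refine ⟨irredSet n N, fun P hP => hP.1,
      (one_sub_irredSet_density_isBigO hn hN).trans log_div_self_isBigO_log_div_sqrt, ?_⟩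
    rintro P ⟨⟨hdeg, -, -⟩, hirr⟩
    have htwo : 2 ≤ P.natDegree := hdeg ▸ hn.trans (Nat.le_of_dvd hN.bot_lt hdvd)
    exact exists_ncard_twists_isBigO hn0 hdvd hdeg
      (exists_hasLowerDensity_noProjectiveRootPrimes hirr htwo)
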